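/- arXiv:1301.1401 — 3 statements merged into one kernel-verified Lean document; each statement's English description precedes it below -/
import Mathlib

section
/- Let r ∈ {2,3} and let G be a finite abelian group with r ∤ |G| and K_1(G) = K_1^*(G). Then for every UFIM S over (C_r ⊕ G)∖{0}, either k(S) ≤ K_1^*(C_r ⊕ G) = 1 + K_1^*(G), or every irreducible factor of S contains an element lying outside the subgroup C_r ⊕ {0}. -/
open Finset

/-- `S(I)` is minimal zero-sum: nonempty, zero-sum, and no proper nonempty
subfamily is zero-sum. -/
def IsMinZeroSum {G : Type*} [AddCommGroup G] {ℓ : ℕ} (g : Fin ℓ → G)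
    (I : Finset (Fin ℓ)) : Prop :=
  I.Nonempty ∧ ∑ i ∈ I, g i = 0 ∧ ∀ J ⊂ I, J.Nonempty → ∑ i ∈ J, g i ≠ 0

/-- `P` is an irreducible factorization of the indexed multiset `g`: a partition
of the index set all of whose parts are minimal zero-sum. -/
def IsFactorization {G : Type*} [AddCommGroup G] {ℓ : ℕ} (g : Fin ℓ → G)
    (P : Finpartition (Finset.univ : Finset (Fin ℓ))) : Prop :=
  ∀ I ∈ P.parts, IsMinZeroSum g I

/-- `g` is a unique factorization indexed multiset (UFIM) over `G∖{0}`: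
all elements are nonzero and there is exactly one irreducible factorization. -/
def IsUFIM {G : Type*} [AddCommGroup G] {ℓ : ℕ} (g : Fin ℓ → G) : Prop :=
  (∀ i, g i ≠ 0) ∧
  ∃! P : Finpartition (Finset.univ : Finset (Fin ℓ)), IsFactorization g P

/-- The cross number `k(S) = ∑ 1/ord(g_i)`. -/
noncomputable def crossNum {G : Type*} [AddCommGroup G] {ℓ : ℕ} (g : Fin ℓ → G) : ℝ :=
  ∑ i, (1 : ℝ) / (addOrderOf (g i) : ℝ)

/-- `K₁(G)`: the maximal cross number of a UFIM over `G∖{0}`. -/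
noncomputable def K1 (G : Type*) [AddCommGroup G] : ℝ :=
  sSup {x : ℝ | ∃ (ℓ : ℕ) (g : Fin ℓ → G), IsUFIM g ∧ crossNum g = x}

/-- `N₁(G)`: the maximal length of a UFIM over `G∖{0}`. -/
noncomputable def N1 (G : Type*) [AddCommGroup G] : ℕ :=
  sSup {n : ℕ | ∃ g : Fin n → G, IsUFIM g}

/-- `K(G)`: the maximal cross number of a minimal zero-sum indexed multiset over `G∖{0}`. -/
noncomputable def Kcross (G : Type*) [AddCommGroup G] : ℝ :=
  sSup {x : ℝ | ∃ (ℓ : ℕ) (g : Fin ℓ → G), (∀ i, g i ≠ 0) ∧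
    IsMinZeroSum g Finset.univ ∧ crossNum g = x}

/-- `g` is zero-sum free: no nonempty subfamily is zero-sum. -/
def IsZeroSumFree {G : Type*} [AddCommGroup G] {ℓ : ℕ} (g : Fin ℓ → G) : Prop :=
  ∀ I : Finset (Fin ℓ), I.Nonempty → ∑ i ∈ I, g i ≠ 0

/-- The little cross number `k(G)`: the maximal cross number of a zero-sum free
indexed multiset over `G∖{0}`. -/
noncomputable def littleCross (G : Type*) [AddCommGroup G] : ℝ :=
  sSup {x : ℝ | ∃ (ℓ : ℕ) (g : Fin ℓ → G), (∀ i, g i ≠ 0) ∧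
    IsZeroSumFree g ∧ crossNum g = x}

lemma exists_minZS {G : Type*} [AddCommGroup G] {ℓ : ℕ} (g : Fin ℓ → G) (s : Finset (Fin ℓ))
    (hs : s.Nonempty) (h0 : ∑ i ∈ s, g i = 0) : ∃ J ⊆ s, IsMinZeroSum g J := by
  induction s using Finset.strongInduction with
  | H s ih =>
    by_cases h : ∀ J ⊂ s, J.Nonempty → ∑ i ∈ J, g i ≠ 0
    · exact ⟨s, Subset.refl _, hs, h0, h⟩
    · push Not at h
      obtain ⟨J, hJs, hJ, hJ0⟩ := h
      obtain ⟨K, hK, hK'⟩ := ih J hJs hJ hJ0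
      exact ⟨K, hK.trans hJs.subset, hK'⟩

lemma extend_fact {G : Type*} [AddCommGroup G] {ℓ : ℕ} (g : Fin ℓ → G) (s : Finset (Fin ℓ))
    (h0 : ∑ i ∈ s, g i = 0) : ∀ (u v : Finset (Fin ℓ)) (_ : Disjoint u s) (_ : u ⊔ s = v)
      (R : Finpartition u) (_ : ∀ A ∈ R.parts, IsMinZeroSum g A),
      ∃ Q : Finpartition v, (∀ A ∈ Q.parts, IsMinZeroSum g A) ∧ R.parts ⊆ Q.parts := by
  induction s using Finset.strongInduction with
  | H s ih =>
    intro u v hd hv R hR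
    rcases s.eq_empty_or_nonempty with rfl | hs
    · have : u = v := by simpa using hv
      subst this
      exact ⟨R, hR, Subset.refl _⟩
    · obtain ⟨J, hJs, hJ⟩ := exists_minZS g s hs h0
      have hne : J ≠ ⊥ := hJ.1.ne_empty
      have hdJ : Disjoint u J := hd.mono_right hJs
      have hlt : s \ J ⊂ s := by
        refine sdiff_ssubset hJs hJ.1
      have hsum : ∑ i ∈ s \ J, g i = 0 := by
        have := Finset.sum_sdiff (f := g) hJs
        rw [hJ.2.1, h0, add_zero] at this
        exact this
      have hd2 : Disjoint (u ⊔ J) (s \ J) := by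
        rw [disjoint_sup_left]
        exact ⟨hd.mono_right sdiff_subset, disjoint_sdiff⟩
      have hv2 : (u ⊔ J) ⊔ (s \ J) = v := by
        rw [← hv, sup_assoc]
        congr 1
        exact union_sdiff_of_subset hJs
      obtain ⟨Q, hQ, hQ'⟩ := ih (s \ J) hlt hsum (u ⊔ J) v hd2 hv2 (R.extend hne hdJ rfl) (by
        intro A hA
        simp only [Finpartition.extend_parts, mem_insert] at hA
        rcases hA with rfl | hA
        · exact hJ
        · exact hR A hA)
      refine ⟨Q, hQ, fun A hA => hQ' ?_⟩
      simp only [Finpartition.extend_parts, mem_insert]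
      exact Or.inr hA

lemma exists_fact {G : Type*} [AddCommGroup G] {ℓ : ℕ} (g : Fin ℓ → G) (s : Finset (Fin ℓ))
    (h0 : ∑ i ∈ s, g i = 0) : ∃ Q : Finpartition s, ∀ A ∈ Q.parts, IsMinZeroSum g A := by
  obtain ⟨Q, hQ, -⟩ := extend_fact g s h0 ∅ s (disjoint_empty_left _) (by simp)
    (Finpartition.empty _) (by simp)
  exact ⟨Q, hQ⟩

lemma total_zero {G : Type*} [AddCommGroup G] {ℓ : ℕ} {g : Fin ℓ → G}
    {P : Finpartition (Finset.univ : Finset (Fin ℓ))} (hP : IsFactorization g P) :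
    ∑ i, g i = 0 := by
  rw [← P.biUnion_parts, Finset.sum_biUnion P.disjoint]
  exact Finset.sum_eq_zero fun A hA => (hP A hA).2.1

/-- In a UFIM a zero-sum subfamily meeting a factor contains it. -/
lemma ufim_subset {G : Type*} [AddCommGroup G] {ℓ : ℕ} {g : Fin ℓ → G} (hg : IsUFIM g)
    {P : Finpartition (Finset.univ : Finset (Fin ℓ))} (hP : IsFactorization g P)
    {I : Finset (Fin ℓ)} (hI : I ∈ P.parts) {Z : Finset (Fin ℓ)} (hZ : ∑ i ∈ Z, g i = 0)
    {x : Fin ℓ} (hxI : x ∈ I) (hxZ : x ∈ Z) : I ⊆ Z := by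
  obtain ⟨R, hR⟩ := exists_fact g Z hZ
  have hZc : ∑ i ∈ Zᶜ, g i = 0 := by
    have := Finset.sum_add_sum_compl Z g
    rw [hZ, total_zero hP, zero_add] at this
    exact this
  obtain ⟨Q, hQ, hRQ⟩ := extend_fact g Zᶜ hZc Z univ disjoint_compl_right
    (by simp) R hR
  have hQP : Q = P := hg.2.unique hQ hP
  subst hQP
  obtain ⟨A, hA, hxA⟩ := R.exists_mem hxZ
  have : A = I := Q.disjoint.elim_finset (hRQ hA) hI x hxA hxI
  subst this
  exact R.le hA

lemma k_le {G : Type*} [AddCommGroup G] [Finite G]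
    (r : ℕ) (hr : r = 2 ∨ r = 3)
    {ℓ : ℕ} (g : Fin ℓ → ZMod r × G) (hg : IsUFIM g)
    (P : Finpartition (Finset.univ : Finset (Fin ℓ))) (hP : IsFactorization g P)
    (I : Finset (Fin ℓ)) (hI : I ∈ P.parts) (hI2 : ∀ i ∈ I, (g i).2 = 0) :
    ∃ (m : ℕ) (h : Fin m → G), IsUFIM h ∧ crossNum g ≤ 1 + crossNum h := by
  have hmin := hP I hI
  have hI1 : ∀ i ∈ I, (g i).1 ≠ 0 := fun i hi h1 => hg.1 i (Prod.ext h1 (hI2 i hi))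
  have hprime : r.Prime := by rcases hr with rfl | rfl <;> norm_num
  -- every element of `C_r` nonzero is minus the sum of a proper nonempty subfamily of `I`
  have hsub : ∀ a : ZMod r, a ≠ 0 → ∃ J ⊂ I, J.Nonempty ∧ ∑ i ∈ J, g i = (-a, 0) := by
    intro a ha
    obtain ⟨x, hx⟩ := hmin.1
    have hs1 : ({x} : Finset (Fin ℓ)) ⊂ I := by
      refine (singleton_subset_iff.2 hx).ssubset_of_ne ?_
      rintro rfl
      exact hg.1 x (by simpa using hmin.2.1)
    have hgx : g x = ((g x).1, 0) := Prod.ext rfl (hI2 x hx)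
    have hcases : (g x).1 = -a ∨ -(g x).1 = -a := by
      have := hI1 x hx
      generalize (g x).1 = b at this
      rcases hr with rfl | rfl
      · revert a b; decide
      · revert a b; decide
    rcases hcases with h | h
    · exact ⟨{x}, hs1, singleton_nonempty x, by rw [sum_singleton, hgx, h]⟩
    · refine ⟨I \ {x}, sdiff_ssubset hs1.subset (singleton_nonempty x),
        sdiff_nonempty.2 hs1.2, ?_⟩
      have := Finset.sum_sdiff (f := g) hs1.subset
      rw [hmin.2.1, sum_singleton] at this
      rw [eq_neg_of_add_eq_zero_left this, hgx, Prod.neg_mk, h, neg_zero]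
  -- key claim
  have key : ∀ T : Finset (Fin ℓ), Disjoint T I → ∑ i ∈ T, (g i).2 = 0 → ∑ i ∈ T, g i = 0 := by
    intro T hT hT0
    by_contra hne
    have h2 : (∑ i ∈ T, g i).2 = 0 := by rw [Prod.snd_sum]; exact hT0
    have h1 : (∑ i ∈ T, g i).1 ≠ 0 := fun h1 => hne (Prod.ext h1 h2)
    obtain ⟨J, hJI, ⟨x, hx⟩, hJ⟩ := hsub _ h1
    have hdis : Disjoint T J := hT.mono_right hJI.subset
    have hZ : ∑ i ∈ T ∪ J, g i = 0 := by
      rw [sum_union hdis, hJ]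
      refine Prod.ext ?_ ?_
      · simp
      · rw [Prod.snd_add, h2]; simp
    have := ufim_subset hg hP hI hZ (hJI.subset hx) (mem_union_right _ hx)
    refine hJI.2 fun y hy => ?_
    rcases mem_union.1 (this hy) with h | h
    · exact absurd hy (disjoint_left.1 hT h)
    · exact h
  -- reindexing
  obtain ⟨m, f, hf⟩ : ∃ (m : ℕ) (f : Fin m ↪ Fin ℓ), (univ : Finset (Fin m)).map f = Iᶜ :=
    ⟨_, (Iᶜ.orderEmbOfFin rfl).toEmbedding, Finset.map_orderEmbOfFin_univ Iᶜ rfl⟩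
  have hfI : ∀ A : Finset (Fin m), Disjoint (A.map f) I := by
    intro A
    have : A.map f ⊆ Iᶜ := by rw [← hf]; exact map_subset_map.2 (subset_univ _)
    exact disjoint_compl_left.mono_left this
  let h : Fin m → G := fun j => (g (f j)).2
  have key2 : ∀ A : Finset (Fin m), ∑ j ∈ A, h j = 0 → ∑ i ∈ A.map f, g i = 0 := by
    intro A hA
    apply key _ (hfI A)
    rw [sum_map]; exact hA
  have key3 : ∀ A : Finset (Fin m), ∑ i ∈ A.map f, g i = 0 → ∑ j ∈ A, h j = 0 := by
    intro A hA
    have := congrArg Prod.snd hA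
    rw [Prod.snd_sum, sum_map] at this
    exact this
  have hminf : ∀ A, IsMinZeroSum h A → IsMinZeroSum g (A.map f) := by
    rintro A ⟨hA1, hA2, hA3⟩
    refine ⟨hA1.map, key2 A hA2, fun K hK hKne hK0 => ?_⟩
    obtain ⟨K', hK', rfl⟩ := subset_map_iff.1 hK.subset
    refine hA3 K' ⟨hK', fun hh => hK.2 (map_subset_map.2 hh)⟩ (by simpa using hKne) (key3 _ hK0)
  have huf : IsUFIM h := by
    refine ⟨fun j hj => ?_, ?_⟩
    · have := key2 {j} (by simpa using hj)
      simp only [map_singleton, sum_singleton] at this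
      exact hg.1 _ this
    · have h0 : ∑ j, h j = 0 := by
        apply key3
        rw [hf]
        have := Finset.sum_add_sum_compl I g
        rw [hmin.2.1, total_zero hP, zero_add] at this
        exact this
      obtain ⟨Q, hQ⟩ := exists_fact h univ h0
      refine ⟨Q, hQ, fun Q' hQ' => ?_⟩
      have main : ∀ R : Finpartition (univ : Finset (Fin m)), IsFactorization h R →
          ∀ A ∈ R.parts, A.map f ∈ P.parts := by
        intro R hR A hA
        have hm := hminf A (hR A hA)
        obtain ⟨x, hx⟩ := hm.1
        obtain ⟨B, hB, hxB⟩ := P.exists_mem (mem_univ x)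
        have hBA := ufim_subset hg hP hB hm.2.1 hxB hx
        have : B = A.map f := by
          by_contra hne
          exact hm.2.2 B (hBA.ssubset_of_ne hne) ⟨x, hxB⟩ (hP B hB).2.1
        exact this ▸ hB
      have sub : ∀ R R' : Finpartition (univ : Finset (Fin m)), IsFactorization h R →
          IsFactorization h R' → R.parts ⊆ R'.parts := by
        intro R R' hR hR' A hA
        obtain ⟨x, hx⟩ := (hR A hA).1
        obtain ⟨B, hB, hxB⟩ := R'.exists_mem (mem_univ x)
        have : A.map f = B.map f := P.disjoint.elim_finset (main R hR A hA) (main R' hR' B hB)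
          (f x) (mem_map_of_mem f hx) (mem_map_of_mem f hxB)
        rw [map_inj] at this
        exact this ▸ hB
      exact Finpartition.ext (Subset.antisymm (sub Q' Q hQ' hQ) (sub Q Q' hQ hQ'))
  refine ⟨_, h, huf, ?_⟩
  -- cross numbers
  have hcard : I.card ≤ r := by
    by_contra hlt
    push Not at hlt
    obtain ⟨T, hTI, hT⟩ := exists_subset_card_eq hlt.le
    have hTs : T ⊂ I := hTI.ssubset_of_ne (by rintro rfl; omega)
    have hz : ∀ K ⊆ T, K.Nonempty → ∑ i ∈ K, (g i).1 ≠ 0 := by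
      intro K hK hKne hK0
      refine hmin.2.2 K (hK.trans_ssubset hTs) hKne (Prod.ext ?_ ?_)
      · rw [Prod.fst_sum]; exact hK0
      · rw [Prod.snd_sum]; exact sum_eq_zero fun i hi => hI2 i (hTI (hK hi))
    rcases hr with rfl | rfl
    · obtain ⟨x, y, hxy, rfl⟩ := card_eq_two.1 hT
      have h1 := hz {x, y} (Subset.refl _) (by simp)
      have h2 := hz {x} (by simp) (by simp)
      have h3 := hz {y} (by simp) (by simp)
      rw [sum_pair hxy] at h1
      rw [sum_singleton] at h2 h3
      generalize (g x).1 = a at *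
      generalize (g y).1 = b at *
      clear * - h1 h2 h3
      revert a b; decide
    · obtain ⟨x, y, z, hxy, hxz, hyz, rfl⟩ := card_eq_three.1 hT
      have h0 := hz {x, y, z} (Subset.refl _) (by simp)
      have h1 := hz {x, y} (by intro; simp; tauto) (by simp)
      have h2 := hz {x} (by simp) (by simp)
      have h3 := hz {y} (by simp) (by simp)
      have h4 := hz {z} (by simp) (by simp)
      have h5 := hz {x, z} (by intro; simp; tauto) (by simp)
      rw [sum_insert (by simp [hxy, hxz]), sum_pair hyz] at h0
      rw [sum_pair hxy] at h1
      rw [sum_pair hxz] at h5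
      rw [sum_singleton] at h2 h3 h4
      generalize (g x).1 = a at *
      generalize (g y).1 = b at *
      generalize (g z).1 = c at *
      clear * - h0 h1 h2 h3 h4 h5
      revert a b c; decide
  unfold crossNum
  rw [← Finset.sum_add_sum_compl I]
  have : NeZero r := ⟨hprime.ne_zero⟩
  have hrpos : (0 : ℝ) < r := by exact_mod_cast hprime.pos
  refine add_le_add ?_ ?_
  · have : ∀ i ∈ I, (1 : ℝ) / (addOrderOf (g i) : ℝ) = 1 / r := by
      intro i hi
      have : Fact r.Prime := ⟨hprime⟩
      rw [addOrderOf_eq_prime (p := r) _ (hg.1 i)]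
      refine Prod.ext ?_ ?_
      · simp
      · simp [hI2 i hi]
    rw [sum_congr rfl this, sum_const, nsmul_eq_mul, mul_one_div, div_le_one hrpos]
    exact_mod_cast hcard
  · rw [← hf, sum_map]
    refine sum_le_sum fun j _ => ?_
    have hdvd : addOrderOf (h j) ∣ addOrderOf (g (f j)) :=
      addOrderOf_map_dvd (AddMonoidHom.snd (ZMod r) G) (g (f j))
    have hp1 : 0 < addOrderOf (h j) := addOrderOf_pos _
    have hp2 : 0 < addOrderOf (g (f j)) := addOrderOf_pos _
    refine one_div_le_one_div_of_le (by exact_mod_cast hp1) ?_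
    exact_mod_cast Nat.le_of_dvd hp2 hdvd

/-- Lemma (roplus): let `r ∈ {2,3}` and `G = ⊕_i C_{p_i^{e_i}}` a finite abelian group with
`r ∤ |G|` and `K₁(G) = K₁*(G)`. Then for every UFIM `S` over `(C_r ⊕ G)∖{0}`, either
`k(S) ≤ K₁*(C_r ⊕ G) = 1 + K₁*(G)`, or every irreducible factor of `S` contains an element
lying outside the subgroup `C_r ⊕ {0}`. -/
theorem roplus_dichotomy (r : ℕ) (hr : r = 2 ∨ r = 3)
    (t : ℕ) (p : Fin t → ℕ) (hp : ∀ i, (p i).Prime) (e : Fin t → ℕ) (he : ∀ i, 0 < e i)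
    (hrG : ¬ r ∣ ∏ i, p i ^ e i)
    (hK1 : K1 ((i : Fin t) → ZMod (p i ^ e i)) =
      ∑ i, ((p i : ℝ) ^ e i - 1) / ((p i : ℝ) ^ e i - (p i : ℝ) ^ (e i - 1)))
    {ℓ : ℕ} (g : Fin ℓ → ZMod r × ((i : Fin t) → ZMod (p i ^ e i))) (hg : IsUFIM g) :
    crossNum g ≤
      1 + ∑ i, ((p i : ℝ) ^ e i - 1) / ((p i : ℝ) ^ e i - (p i : ℝ) ^ (e i - 1)) ∨
    ∀ P : Finpartition (Finset.univ : Finset (Fin ℓ)), IsFactorization g P →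
      ∀ I ∈ P.parts, ∃ i ∈ I, (g i).2 ≠ 0 := by
  by_contra hcon
  push Not at hcon
  obtain ⟨hgt, P, hP, I, hI, hI2⟩ := hcon
  have : ∀ i, NeZero (p i ^ e i) := fun i => ⟨pow_ne_zero _ (hp i).ne_zero⟩
  obtain ⟨m, h, hh, hle⟩ := k_le r hr g hg P hP I hI hI2
  have hpos : ∀ i, 0 < ((p i : ℝ) ^ e i - 1) / ((p i : ℝ) ^ e i - (p i : ℝ) ^ (e i - 1)) := by
    intro i
    have h1 : (1 : ℝ) < p i := by exact_mod_cast (hp i).one_lt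
    have h2 : (1 : ℝ) < (p i : ℝ) ^ e i := one_lt_pow₀ h1 (he i).ne'
    have h3 : (p i : ℝ) ^ (e i - 1) < (p i : ℝ) ^ e i :=
      pow_lt_pow_right₀ h1 (Nat.sub_lt (he i) one_pos)
    exact div_pos (by linarith) (by linarith)
  have hbdd : BddAbove {x : ℝ | ∃ (ℓ : ℕ) (g : Fin ℓ → ((i : Fin t) → ZMod (p i ^ e i))),
      IsUFIM g ∧ crossNum g = x} := by
    by_contra hnb
    have h0 : K1 ((i : Fin t) → ZMod (p i ^ e i)) = 0 := Real.sSup_of_not_bddAbove hnb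
    rw [hK1, Finset.sum_eq_zero_iff_of_nonneg fun i _ => (hpos i).le] at h0
    have ht : IsEmpty (Fin t) := ⟨fun i => (hpos i).ne' (h0 i (mem_univ i))⟩
    refine hnb ⟨0, ?_⟩
    rintro x ⟨n, k, hk, rfl⟩
    have : IsEmpty (Fin n) := ⟨fun j => hk.1 j (Subsingleton.elim _ _)⟩
    simp [crossNum]
  have := le_csSup hbdd ⟨m, h, hh, rfl⟩
  change _ ≤ K1 _ at this
  rw [hK1] at this
  linarith
end

section
/- Let p and q be distinct primes and let S be a UFIM over C_{pq}∖{0} with k(S) = K_1(C_{pq}) = 2. Then no element of S has order pq; consequently S decomposes as a disjoint union S = S_p ⊔ S_q, where S_p is a UFIM over (the unique subgroup of C_{pq} of order p)∖{0} and S_q is a UFIM over (the unique subgroup of C_{pq} of order q)∖{0}. Moreover S contains exactly p elements of order p and exactly q elements of order q. -/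
open Finset

/-- Zero-sum subfamilies are closed under intersection. -/
def InterClosed {ι G : Type*} [DecidableEq ι] [AddCommGroup G] (g : ι → G)
    (s : Finset ι) : Prop :=
  ∀ I ⊆ s, ∀ J ⊆ s, ∑ i ∈ I, g i = 0 → ∑ i ∈ J, g i = 0 → ∑ i ∈ I ∩ J, g i = 0

lemma InterClosed.mono {ι G : Type*} [DecidableEq ι] [AddCommGroup G] {g : ι → G}
    {s t : Finset ι} (h : InterClosed g s) (hts : t ⊆ s) : InterClosed g t :=
  fun I hI J hJ => h I (hI.trans hts) J (hJ.trans hts)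

/-- Prefix sums of a zero-sum free family. -/
lemma exists_chain {ι G : Type*} [DecidableEq ι] [AddCommGroup G] (g : ι → G)
    (s : Finset ι) (hs : ∀ I ⊆ s, I.Nonempty → ∑ i ∈ I, g i ≠ 0) :
    ∃ P : Finset G, P.card = s.card + 1 ∧ ∑ i ∈ s, g i ∈ P ∧
      ∀ x ∈ P, (∃ A ⊆ s, ∑ i ∈ A, g i = ∑ i ∈ s, g i - x) ∧
        ∀ y ∈ P, ∃ A ⊆ s, ∑ i ∈ A, g i = y - x ∨ ∑ i ∈ A, g i = x - y := by
  classical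
  induction s using Finset.induction_on with
  | empty => exact ⟨{0}, by simp⟩
  | insert a s ha ih =>
    obtain ⟨P, hc, hm, hP⟩ := ih (fun I hI => hs I (hI.trans (subset_insert _ _)))
    have key : ∀ x ∈ P, ∃ A ⊆ insert a s, a ∈ A ∧
        ∑ i ∈ A, g i = ∑ i ∈ insert a s, g i - x := by
      intro x hx
      obtain ⟨A, hA, h⟩ := (hP x hx).1
      refine ⟨insert a A, insert_subset_insert _ hA, mem_insert_self _ _, ?_⟩
      rw [sum_insert ha, sum_insert (fun h => ha (hA h)), h]; abel
    have hn : ∑ i ∈ insert a s, g i ∉ P := by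
      intro h
      obtain ⟨A, hA, haA, h⟩ := key _ h
      exact hs A hA ⟨a, haA⟩ (by simpa using h)
    refine ⟨insert (∑ i ∈ insert a s, g i) P, ?_, mem_insert_self _ _, ?_⟩
    · rw [card_insert_of_notMem hn, card_insert_of_notMem ha, hc]
    · intro x hx
      rcases mem_insert.1 hx with rfl | hx
      · refine ⟨⟨∅, by simp, by simp⟩, ?_⟩
        intro y hy
        rcases mem_insert.1 hy with rfl | hy
        · exact ⟨∅, by simp, by simp⟩
        · obtain ⟨A, hA, _, h⟩ := key y hy
          exact ⟨A, hA, Or.inr h⟩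
      · obtain ⟨A, hA, _, h⟩ := key x hx
        refine ⟨⟨A, hA, h⟩, ?_⟩
        intro y hy
        rcases mem_insert.1 hy with rfl | hy
        · exact ⟨A, hA, Or.inl h⟩
        · obtain ⟨A, hA, h⟩ := (hP x hx).2 y hy
          exact ⟨A, hA.trans (subset_insert _ _), h⟩

/-- Every nonempty zero-sum family contains a minimal one. -/
lemma exists_minimal {ι G : Type*} [DecidableEq ι] [AddCommGroup G] (g : ι → G)
    (s : Finset ι) (hs : ∃ I ⊆ s, I.Nonempty ∧ ∑ i ∈ I, g i = 0) :
    ∃ I ⊆ s, I.Nonempty ∧ ∑ i ∈ I, g i = 0 ∧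
      ∀ J ⊂ I, J.Nonempty → ∑ i ∈ J, g i ≠ 0 := by
  classical
  induction s using Finset.strongInduction with
  | H s ih =>
    obtain ⟨I, hI, hne, h0⟩ := hs
    by_cases h : ∀ J ⊂ I, J.Nonempty → ∑ i ∈ J, g i ≠ 0
    · exact ⟨I, hI, hne, h0, h⟩
    · push Not at h
      obtain ⟨J, hJ, hJn, hJ0⟩ := h
      obtain ⟨K, hK, h⟩ := ih J (lt_of_lt_of_le hJ hI) ⟨J, subset_rfl, hJn, hJ0⟩
      exact ⟨K, hK.trans (hJ.subset.trans hI), h⟩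

lemma exists_atom_set {ι G : Type*} [DecidableEq ι] [AddCommGroup G] (g : ι → G)
    (s : Finset ι) (hne : s.Nonempty) (h0 : ∑ i ∈ s, g i = 0)
    (hs : ∀ J ⊂ s, J.Nonempty → ∑ i ∈ J, g i ≠ 0) :
    ∃ P : Finset G, P.card = s.card ∧
      ∀ x ∈ P, ∀ y ∈ P, ∃ A ⊆ s, ∑ i ∈ A, g i = y - x := by
  classical
  obtain ⟨a, ha⟩ := hne
  obtain ⟨P, hc, -, hP⟩ := exists_chain g (s.erase a)
    (fun I hI => hs I (lt_of_le_of_lt hI (erase_ssubset ha)))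
  refine ⟨P, by rw [hc, card_erase_add_one ha], fun x hx y hy => ?_⟩
  obtain ⟨A, hA, h | h⟩ := (hP x hx).2 y hy
  · exact ⟨A, hA.trans (erase_subset _ _), h⟩
  · refine ⟨s \ A, sdiff_subset, ?_⟩
    have := sum_sdiff (f := g) (hA.trans (erase_subset _ _))
    rw [h0, h] at this
    rw [eq_neg_of_add_eq_zero_left this]; abel

lemma exists_sum_set {ι G : Type*} [DecidableEq ι] [AddCommGroup G] (g : ι → G)
    (s : Finset ι) (hs : InterClosed g s) (hz : ∀ i ∈ s, g i ≠ 0) :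
    ∃ P : Finset G, s.card ≤ P.card ∧ (s.Nonempty → 2 ≤ P.card) ∧
      ∀ x ∈ P, ∀ y ∈ P, ∃ A ⊆ s, ∑ i ∈ A, g i = y - x ∨ ∑ i ∈ A, g i = x - y := by
  classical
  induction s using Finset.strongInduction with
  | H s ih =>
    by_cases hf : ∀ I ⊆ s, I.Nonempty → ∑ i ∈ I, g i ≠ 0
    · obtain ⟨P, hc, -, hP⟩ := exists_chain g s hf
      refine ⟨P, by omega, fun h => ?_, fun x hx => (hP x hx).2⟩
      have := h.card_pos
      omega
    · push Not at hf
      obtain ⟨I, hI, hne, h0, hmin⟩ := exists_minimal g s hf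
      obtain ⟨P, hPc, hP⟩ := exists_atom_set g I hne h0 hmin
      have hI2 : 2 ≤ I.card := by
        by_contra hlt
        have h1 : I.card = 1 := by have := hne.card_pos; omega
        obtain ⟨a, rfl⟩ := card_eq_one.1 h1
        exact hz a (hI (mem_singleton_self a)) (by simpa using h0)
      obtain ⟨Q, hQc, hQ2, hQ⟩ := ih (s \ I) (sdiff_ssubset hI hne) (hs.mono sdiff_subset)
        (fun i hi => hz i (sdiff_subset hi))
      have hcs : (s \ I).card + I.card = s.card := card_sdiff_add_card_eq_card hI
      rcases (s \ I).eq_empty_or_nonempty with he | hn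
      · rw [he, card_empty] at hcs
        refine ⟨P, by omega, fun _ => by omega, fun x hx y hy => ?_⟩
        obtain ⟨A, hA, h⟩ := hP x hx y hy
        exact ⟨A, hA.trans hI, Or.inl h⟩
      · have hQ2 := hQ2 hn
        have hdis : Disjoint (s \ I) I := sdiff_disjoint
        have hun : ∀ A ⊆ s \ I, ∀ B ⊆ I, ∑ i ∈ A ∪ B, g i = ∑ i ∈ A, g i + ∑ i ∈ B, g i :=
          fun A hA B hB => sum_union (disjoint_of_subset_left hA (disjoint_of_subset_right hB hdis))
        have hsub : ∀ A ⊆ s \ I, ∀ B ⊆ I, A ∪ B ⊆ s :=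
          fun A hA B hB => union_subset (hA.trans sdiff_subset) (hB.trans hI)
        have hB0 : ∀ A ⊆ s \ I, ∀ B ⊆ I, ∑ i ∈ A, g i + ∑ i ∈ B, g i = 0 →
            ∑ i ∈ B, g i = 0 := by
          intro A hA B hB h
          have := hs (A ∪ B) (hsub A hA B hB) I hI (by rw [hun A hA B hB, h]) h0
          have he : (A ∪ B) ∩ I = B := by
            rw [union_inter_distrib_right, inter_eq_left.2 hB,
              disjoint_iff_inter_eq_empty.1 (disjoint_of_subset_left hA hdis), empty_union]
          rwa [he] at this
        have hinj : Set.InjOn (fun z : G × G => z.1 + z.2) (Q ×ˢ P : Finset (G × G)) := by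
          rintro ⟨x, y⟩ h1 ⟨x', y'⟩ h2 (h : x + y = x' + y')
          simp only [coe_product, Set.mem_prod, mem_coe] at h1 h2
          have hyy : y = y' := by
            obtain ⟨A, hA, h3 | h3⟩ := hQ x h1.1 x' h2.1
            · obtain ⟨B, hB, h4⟩ := hP y h1.2 y' h2.2
              have := hB0 A hA B hB (by
                rw [h3, h4, sub_add_sub_comm, h, sub_self])
              rw [h4] at this
              exact (sub_eq_zero.1 this).symm
            · obtain ⟨B, hB, h4⟩ := hP y' h2.2 y h1.2
              have := hB0 A hA B hB (by
                rw [h3, h4, sub_add_sub_comm, h, sub_self])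
              rw [h4] at this
              exact sub_eq_zero.1 this
          subst hyy
          rw [add_right_cancel h]
        refine ⟨(Q ×ˢ P).image (fun z => z.1 + z.2), ?_, ?_, ?_⟩
        · rw [card_image_of_injOn hinj, card_product]; nlinarith
        · intro _; rw [card_image_of_injOn hinj, card_product]; nlinarith
        · intro z hz w hw
          simp only [mem_image, mem_product, Prod.exists] at hz hw
          obtain ⟨x, y, ⟨hx, hy⟩, rfl⟩ := hz
          obtain ⟨x', y', ⟨hx', hy'⟩, rfl⟩ := hw
          obtain ⟨A, hA, h3 | h3⟩ := hQ x hx x' hx'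
          · obtain ⟨B, hB, h4⟩ := hP y hy y' hy'
            exact ⟨A ∪ B, hsub A hA B hB, Or.inl (by rw [hun A hA B hB, h3, h4]; abel)⟩
          · obtain ⟨B, hB, h4⟩ := hP y' hy' y hy
            exact ⟨A ∪ B, hsub A hA B hB, Or.inr (by rw [hun A hA B hB, h3, h4]; abel)⟩

/-- Narkiewicz type bound. -/
lemma card_le_of_interClosed {ι G : Type*} [DecidableEq ι] [AddCommGroup G] [Fintype G]
    (g : ι → G) (s : Finset ι) (hs : InterClosed g s) (hz : ∀ i ∈ s, g i ≠ 0) :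
    s.card ≤ Fintype.card G := by
  obtain ⟨P, h, -⟩ := exists_sum_set g s hs hz
  exact h.trans (card_le_univ P)

section Main

variable {ι G M N : Type*} [DecidableEq ι] [AddCommGroup G] [AddCommGroup M] [AddCommGroup N]
  [Fintype M] [Fintype N]

/-- A family of disjoint subsets with sums in the kernel of `ψ` but not of `φ` is small. -/
lemma family_card_le (φ : G →+ M) (ψ : G →+ N) (hinj : ∀ x, φ x = 0 → ψ x = 0 → x = 0)
    (g : ι → G) (s : Finset ι) (hs : InterClosed g s) (T : Finset (Finset ι))
    (hT : ∀ X ∈ T, X ⊆ s ∧ ψ (∑ i ∈ X, g i) = 0 ∧ φ (∑ i ∈ X, g i) ≠ 0)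
    (hd : (T : Set (Finset ι)).PairwiseDisjoint id) : T.card ≤ Fintype.card M := by
  classical
  refine card_le_of_interClosed (fun X : Finset ι => φ (∑ i ∈ X, g i)) T ?_
    (fun X hX => (hT X hX).2.2)
  have hsum : ∀ U ⊆ T, ∑ i ∈ U.biUnion id, g i = ∑ X ∈ U, ∑ i ∈ X, g i := fun U hU =>
    sum_biUnion (hd.subset (by exact_mod_cast hU))
  have hsub : ∀ U ⊆ T, U.biUnion id ⊆ s := fun U hU =>
    biUnion_subset.2 (fun X hX => (hT X (hU hX)).1)
  have hzero : ∀ U ⊆ T, ∑ X ∈ U, φ (∑ i ∈ X, g i) = 0 → ∑ i ∈ U.biUnion id, g i = 0 := by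
    intro U hU h
    rw [hsum U hU]
    refine hinj _ (by rw [map_sum]; exact h) ?_
    rw [map_sum]
    exact sum_eq_zero (fun X hX => (hT X (hU hX)).2.1)
  intro U hU V hV hU0 hV0
  have h := hs _ (hsub U hU) _ (hsub V hV) (hzero U hU hU0) (hzero V hV hV0)
  have he : U.biUnion id ∩ V.biUnion id = (U ∩ V).biUnion id := by
    ext i
    simp only [mem_inter, mem_biUnion, id]
    constructor
    · rintro ⟨⟨X, hX, hi⟩, Y, hY, hi'⟩
      have : X = Y := by
        by_contra hne
        exact disjoint_left.1 (hd (hU hX) (hV hY) hne) hi hi'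
      subst this
      exact ⟨X, ⟨hX, hY⟩, hi⟩
    · rintro ⟨X, ⟨hX, hY⟩, hi⟩
      exact ⟨⟨X, hX, hi⟩, X, hY, hi⟩
  rw [he, hsum _ (inter_subset_left.trans hU)] at h
  have := congrArg φ h
  rwa [map_sum, map_zero] at this

lemma extraction (φ : G →+ M) (ψ : G →+ N)
    (g : ι → G) (D : Finset ι) (hD : ∀ i ∈ D, ψ (g i) ≠ 0) :
    ∃ (T : Finset (Finset ι)) (R : Finset ι), R ⊆ D ∧
      (∀ X ∈ T, X ⊆ D ∧ Disjoint X R ∧ ψ (∑ i ∈ X, g i) = 0 ∧ φ (∑ i ∈ X, g i) ≠ 0) ∧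
      (T : Set (Finset ι)).PairwiseDisjoint id ∧
      D.card ≤ Fintype.card N * T.card + R.card ∧
      ∀ J ⊆ R, ψ (∑ i ∈ J, g i) = 0 → φ (∑ i ∈ J, g i) = 0 := by
  classical
  induction D using Finset.strongInduction with
  | H D ih =>
    by_cases h : ∀ J ⊆ D, ψ (∑ i ∈ J, g i) = 0 → φ (∑ i ∈ J, g i) = 0
    · exact ⟨∅, D, subset_rfl, by simp, by simp, by simp, h⟩
    · have hne : (D.powerset.filter (fun J => ψ (∑ i ∈ J, g i) = 0 ∧
          φ (∑ i ∈ J, g i) ≠ 0)).Nonempty := by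
        push Not at h
        obtain ⟨J, hJ, h1, h2⟩ := h
        exact ⟨J, mem_filter.2 ⟨mem_powerset.2 hJ, h1, h2⟩⟩
      obtain ⟨J, hJm, hJmin⟩ := exists_min_image _ card hne
      simp only [mem_filter, mem_powerset] at hJm hJmin
      obtain ⟨hJD, hψ, hφ⟩ := hJm
      have hmin : ∀ K ⊆ J, ψ (∑ i ∈ K, g i) = 0 → K = ∅ ∨ K = J := by
        intro K hK hK0
        by_contra hcon
        push Not at hcon
        obtain ⟨hK1, hK2⟩ := hcon
        have hadd := sum_sdiff (f := g) hK
        have hcard := card_sdiff_add_card_eq_card hK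
        have hpos := hK1.card_pos
        have hlt : K.card < J.card := card_lt_card (lt_of_le_of_ne hK hK2)
        by_cases hKφ : φ (∑ i ∈ K, g i) = 0
        · have := hJmin (J \ K) ⟨sdiff_subset.trans hJD, ?_, ?_⟩
          · omega
          · rw [← hadd, map_add, hK0, add_zero] at hψ; exact hψ
          · rw [← hadd, map_add, hKφ, add_zero] at hφ; exact hφ
        · have := hJmin K ⟨hK.trans hJD, hK0, hKφ⟩
          omega
      have hJne : J.Nonempty := by
        rw [nonempty_iff_ne_empty]; rintro rfl; simp at hφ
      have hJc : J.card ≤ Fintype.card N := by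
        refine card_le_of_interClosed (fun i => ψ (g i)) J ?_ (fun i hi => hD i (hJD hi))
        intro A hA B hB hA0 hB0
        rw [← map_sum] at hA0 hB0
        rcases hmin A hA hA0 with rfl | rfl
        · simp
        · rw [inter_eq_right.2 hB, ← map_sum, hB0]
      obtain ⟨T, R, hR, hT, hd, hc, hz⟩ := ih (D \ J) (sdiff_ssubset hJD hJne)
        (fun i hi => hD i (sdiff_subset hi))
      have hJT : ∀ X ∈ T, Disjoint J X := fun X hX =>
        (disjoint_of_subset_left (hT X hX).1 sdiff_disjoint).symm
      have hJn : J ∉ T := fun hJ => hJne.ne_empty (disjoint_self.1 (hJT J hJ))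
      refine ⟨insert J T, R, hR.trans sdiff_subset, ?_, ?_, ?_, hz⟩
      · intro X hX
        rcases mem_insert.1 hX with rfl | hX
        · exact ⟨hJD, (disjoint_of_subset_left hR sdiff_disjoint).symm, hψ, hφ⟩
        · exact ⟨(hT X hX).1.trans sdiff_subset, (hT X hX).2⟩
      · rw [coe_insert]
        exact hd.insert (fun X hX _ => hJT X hX)
      · rw [card_insert_of_notMem hJn]
        have := card_sdiff_add_card_eq_card hJD
        nlinarith

lemma main_ineq (φ : G →+ M) (ψ : G →+ N) (hinj : ∀ x, φ x = 0 → ψ x = 0 → x = 0)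
    (hM : 2 ≤ Fintype.card M)
    (g : ι → G) (s A B C : Finset ι) (hs : InterClosed g s)
    (hAs : A ⊆ s) (hBs : B ⊆ s) (hCs : C ⊆ s)
    (hA : ∀ i ∈ A, φ (g i) ≠ 0 ∧ ψ (g i) = 0) (hB : ∀ i ∈ B, φ (g i) = 0 ∧ ψ (g i) ≠ 0)
    (hC : ∀ i ∈ C, φ (g i) ≠ 0 ∧ ψ (g i) ≠ 0) :
    Fintype.card N * A.card + Fintype.card M * B.card + C.card
      ≤ 2 * (Fintype.card M * Fintype.card N) ∧
    (Fintype.card N * A.card + Fintype.card M * B.card + C.card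
      = 2 * (Fintype.card M * Fintype.card N) → B.card = Fintype.card N) := by
  classical
  have hw : ∀ R ⊆ s, (∀ J ⊆ R, ψ (∑ i ∈ J, g i) = 0 → φ (∑ i ∈ J, g i) = 0) →
      (∀ i ∈ R, ψ (g i) ≠ 0) → R.card ≤ Fintype.card N := by
    intro R hR h hz
    refine card_le_of_interClosed (fun i => ψ (g i)) R ?_ hz
    intro I hI J hJ hI0 hJ0
    rw [← map_sum] at hI0 hJ0 ⊢
    rw [hs I (hI.trans hR) J (hJ.trans hR) (hinj _ (h I hI hI0) hI0)
      (hinj _ (h J hJ hJ0) hJ0), map_zero]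
  have hBc : B.card ≤ Fintype.card N := hw B hBs
    (fun J hJ _ => by rw [map_sum]; exact sum_eq_zero (fun i hi => (hB i (hJ hi)).1))
    (fun i hi => (hB i hi).2)
  obtain ⟨T, R, hRC, hT, hd, hc, hz⟩ := extraction φ ψ g C (fun i hi => (hC i hi).2)
  have hRc : R.card ≤ Fintype.card N := hw R (hRC.trans hCs) hz (fun i hi => (hC i (hRC hi)).2)
  have hAB : Disjoint A B := disjoint_left.2 (fun i h1 h2 => (hA i h1).1 (hB i h2).1)
  have hAC : Disjoint A C := disjoint_left.2 (fun i h1 h2 => (hC i h2).2 (hA i h1).2)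
  have hBC : Disjoint B C := disjoint_left.2 (fun i h1 h2 => (hC i h2).1 (hB i h1).1)
  -- the family
  set F : Finset (Finset ι) := A.image (fun i => {i}) ∪ T with hF
  have hFc : F.card = A.card + T.card := by
    rw [hF, card_union_of_disjoint, card_image_of_injective _ singleton_injective]
    rw [disjoint_left]
    intro X hX hXT
    obtain ⟨i, hi, rfl⟩ := mem_image.1 hX
    exact disjoint_left.1 hAC hi ((hT _ hXT).1 (mem_singleton_self i))
  have hFT : ∀ X ∈ F, (X ⊆ s ∧ ψ (∑ i ∈ X, g i) = 0 ∧ φ (∑ i ∈ X, g i) ≠ 0) ∧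
      Disjoint X (R ∪ B) := by
    intro X hX
    rcases mem_union.1 hX with hX | hX
    · obtain ⟨i, hi, rfl⟩ := mem_image.1 hX
      refine ⟨⟨by simpa using hAs hi, by simpa using (hA i hi).2, by simpa using (hA i hi).1⟩, ?_⟩
      rw [disjoint_singleton_left, mem_union, not_or]
      exact ⟨fun h => disjoint_left.1 hAC hi (hRC h), disjoint_left.1 hAB hi⟩
    · have h := hT X hX
      refine ⟨⟨h.1.trans hCs, h.2.2⟩, disjoint_union_right.2 ⟨h.2.1, ?_⟩⟩
      exact disjoint_of_subset_left h.1 hBC.symm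
  have hFd : (F : Set (Finset ι)).PairwiseDisjoint id := by
    intro X hX Y hY hne
    simp only [hF, coe_union, Set.mem_union, mem_coe] at hX hY
    simp only [Function.onFun, id]
    rcases hX with hX | hX <;> rcases hY with hY | hY
    · obtain ⟨i, hi, rfl⟩ := mem_image.1 hX
      obtain ⟨j, hj, rfl⟩ := mem_image.1 hY
      simpa [eq_comm] using hne
    · obtain ⟨i, hi, rfl⟩ := mem_image.1 hX
      exact disjoint_singleton_left.2 (fun h => disjoint_left.1 hAC hi ((hT _ hY).1 h))
    · obtain ⟨i, hi, rfl⟩ := mem_image.1 hY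
      exact disjoint_singleton_right.2 (fun h => disjoint_left.1 hAC hi ((hT _ hX).1 h))
    · exact hd hX hY hne
  have hFle : F.card ≤ Fintype.card M :=
    family_card_le φ ψ hinj g s hs F (fun X hX => (hFT X hX).1) hFd
  have key : F.card < Fintype.card M ∨
      (F.card = Fintype.card M ∧ R.card + B.card ≤ Fintype.card N) := by
    rcases hFle.lt_or_eq with h | h
    · exact Or.inl h
    refine Or.inr ⟨h, ?_⟩
    have hRB : Disjoint R B := disjoint_of_subset_left hRC hBC.symm
    have hRBs : R ∪ B ⊆ s := union_subset (hRC.trans hCs) hBs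
    rw [← card_union_of_disjoint hRB]
    refine hw (R ∪ B) hRBs ?_ ?_
    · intro J hJ hJ0
      by_contra hJ1
      have hJne : J.Nonempty := by
        rw [nonempty_iff_ne_empty]; rintro rfl; simp at hJ1
      have hJF : ∀ X ∈ F, Disjoint J X := fun X hX =>
        (disjoint_of_subset_right hJ (hFT X hX).2).symm
      have hJn : J ∉ F := fun hJ => hJne.ne_empty (disjoint_self.1 (hJF J hJ))
      have := family_card_le φ ψ hinj g s hs (insert J F) (by
        intro X hX
        rcases mem_insert.1 hX with rfl | hX
        · exact ⟨hJ.trans hRBs, hJ0, hJ1⟩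
        · exact (hFT X hX).1) (by
        rw [coe_insert]
        exact hFd.insert (fun X hX _ => hJF X hX))
      rw [card_insert_of_notMem hJn] at this
      omega
    · intro i hi
      rcases mem_union.1 hi with hi | hi
      · exact (hC i (hRC hi)).2
      · exact (hB i hi).2
  clear hw hFT hFd hFle
  generalize Fintype.card M = p at *
  generalize Fintype.card N = q at *
  rw [hFc] at key
  rcases key with h | ⟨h, h2⟩
  · have h1 : q * (A.card + T.card + 1) ≤ q * p := Nat.mul_le_mul_left _ h
    have h3 : p * B.card ≤ p * q := Nat.mul_le_mul_left _ hBc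
    refine ⟨by nlinarith, fun he => ?_⟩
    have : p * q ≤ p * B.card := by nlinarith
    have := Nat.le_of_mul_le_mul_left this (by omega)
    omega
  · have h1 : q * (A.card + T.card) = q * p := by rw [h]
    have h3 : p * (R.card + B.card) ≤ p * q := Nat.mul_le_mul_left _ h2
    have h4 : 2 * R.card ≤ p * R.card := Nat.mul_le_mul_right _ hM
    refine ⟨by nlinarith, fun he => ?_⟩
    have h5 : R.card = 0 := by nlinarith
    have : p * q ≤ p * B.card := by nlinarith
    have := Nat.le_of_mul_le_mul_left this (by omega)
    omega

end Main

/-- A partial factorization extends over a disjoint zero-sum set. -/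
lemma exists_extension {G : Type*} [AddCommGroup G] {ℓ : ℕ} (g : Fin ℓ → G)
    (s : Finset (Fin ℓ)) (hs : ∑ i ∈ s, g i = 0) :
    ∀ (t : Finset (Fin ℓ)) (Q : Finpartition t), (∀ I ∈ Q.parts, IsMinZeroSum g I) →
      Disjoint t s → ∀ u, t ∪ s = u → ∃ P : Finpartition u, Q.parts ⊆ P.parts ∧
        ∀ I ∈ P.parts, IsMinZeroSum g I := by
  induction s using Finset.strongInduction with
  | H s ih =>
    intro t Q hQ hts u hu
    rcases s.eq_empty_or_nonempty with rfl | hne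
    · rw [union_empty] at hu
      subst hu
      exact ⟨Q, subset_rfl, hQ⟩
    · obtain ⟨I, hI, hIne, hI0, hmin⟩ := exists_minimal g s ⟨s, subset_rfl, hne, hs⟩
      have h0 : ∑ i ∈ s \ I, g i = 0 := by
        have := sum_sdiff (f := g) hI
        rw [hI0, hs, add_zero] at this
        exact this
      have htI : Disjoint t I := disjoint_of_subset_right hI hts
      obtain ⟨P, hP1, hP2⟩ := ih (s \ I) (sdiff_ssubset hI hIne) h0 (t ∪ I)
        (Q.extend (b := I) hIne.ne_empty htI rfl) (by
          intro K hK
          rcases mem_insert.1 (show K ∈ insert I Q.parts from hK) with rfl | hK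
          · exact ⟨hIne, hI0, hmin⟩
          · exact hQ K hK) (by
          rw [disjoint_union_left]
          exact ⟨disjoint_of_subset_right sdiff_subset hts, disjoint_sdiff⟩) u (by
          rw [union_assoc, union_sdiff_of_subset hI, hu])
      exact ⟨P, (show Q.parts ⊆ insert I Q.parts from subset_insert _ _).trans hP1, hP2⟩

lemma IsUFIM.interClosed {G : Type*} [AddCommGroup G] {ℓ : ℕ} {g : Fin ℓ → G}
    (h : IsUFIM g) : ∑ i, g i = 0 ∧ InterClosed g univ := by
  obtain ⟨-, P, hP, huniq⟩ := h
  have hsum : ∀ f : Fin ℓ → G, ∑ i, f i = ∑ K ∈ P.parts, ∑ i ∈ K, f i := by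
    intro f
    conv_lhs => rw [← P.biUnion_parts]
    exact sum_biUnion P.disjoint
  have htot : ∑ i, g i = 0 := by
    rw [hsum]; exact sum_eq_zero (fun K hK => (hP K hK).2.1)
  have key : ∀ J : Finset (Fin ℓ), ∑ i ∈ J, g i = 0 → ∀ K ∈ P.parts, K ⊆ J ∨ Disjoint K J := by
    intro J hJ K hK
    obtain ⟨Q, -, hQ⟩ := exists_extension g J hJ ∅ (Finpartition.empty _)
      (fun I hI => absurd hI (notMem_empty I)) (disjoint_empty_left _) J (empty_union _)
    have hc : ∑ i ∈ Jᶜ, g i = 0 := by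
      have := sum_add_sum_compl J g
      rwa [hJ, htot, zero_add] at this
    obtain ⟨P2, hPa, hPb⟩ := exists_extension g Jᶜ hc J Q hQ disjoint_compl_right univ
      (union_compl J)
    obtain rfl := huniq P2 hPb
    by_cases hd : Disjoint K J
    · exact Or.inr hd
    · left
      obtain ⟨i, hiK, hiJ⟩ := not_disjoint_iff.1 hd
      obtain ⟨L, hL, hiL⟩ := Q.exists_mem hiJ
      rw [P2.eq_of_mem_parts hK (hPa hL) hiK hiL]
      exact Q.subset hL
  refine ⟨htot, fun I _ J _ hI hJ => ?_⟩
  have h1 : ∑ i ∈ I ∩ J, g i = ∑ i, if i ∈ I ∩ J then g i else 0 := by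
    rw [sum_ite_mem, univ_inter]
  rw [h1, hsum]
  refine sum_eq_zero (fun K hK => ?_)
  rw [sum_ite_mem]
  rcases key I hI K hK with h | h
  · rcases key J hJ K hK with h' | h'
    · rw [inter_eq_left.2 (subset_inter h h')]; exact (hP K hK).2.1
    · rw [disjoint_iff_inter_eq_empty.1 (disjoint_of_subset_right inter_subset_right h'), sum_empty]
  · rw [disjoint_iff_inter_eq_empty.1 (disjoint_of_subset_right inter_subset_left h), sum_empty]

lemma isUFIM_of_interClosed {G : Type*} [AddCommGroup G] {ℓ : ℕ} {g : Fin ℓ → G}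
    (hz : ∀ i, g i ≠ 0) (h0 : ∑ i, g i = 0) (h : InterClosed g univ) : IsUFIM g := by
  refine ⟨hz, ?_⟩
  obtain ⟨P, -, hP⟩ := exists_extension g univ h0 ∅ (Finpartition.empty _)
      (fun I hI => absurd hI (notMem_empty I)) (disjoint_empty_left _) univ (empty_union _)
  have main : ∀ P Q : Finpartition (univ : Finset (Fin ℓ)), IsFactorization g P →
      IsFactorization g Q → P.parts ⊆ Q.parts := by
    intro P Q hP hQ K hK
    obtain ⟨hne, hK0, hKm⟩ := hP K hK
    obtain ⟨i, hi⟩ := hne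
    obtain ⟨L, hL, hiL⟩ := Q.exists_mem (mem_univ i)
    obtain ⟨-, hL0, hLm⟩ := hQ L hL
    have hI := h K (subset_univ _) L (subset_univ _) hK0 hL0
    have hIn : (K ∩ L).Nonempty := ⟨i, mem_inter.2 ⟨hi, hiL⟩⟩
    have e1 : K ∩ L = K := by
      by_contra hne
      exact hKm _ (lt_of_le_of_ne inter_subset_left hne) hIn hI
    have e2 : K ∩ L = L := by
      by_contra hne
      exact hLm _ (lt_of_le_of_ne inter_subset_right hne) hIn hI
    rw [← e1, e2]; exact hL
  exact ⟨P, hP, fun Q hQ => Finpartition.ext (subset_antisymm (main Q P hQ hP) (main P Q hP hQ))⟩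

/-- Restriction of a UFIM to a zero-sum subset. -/
lemma exists_restrict {G : Type*} [AddCommGroup G] {ℓ : ℕ} {g : Fin ℓ → G}
    (hz : ∀ i, g i ≠ 0) (h : InterClosed g univ) (s : Finset (Fin ℓ))
    (hs : ∑ i ∈ s, g i = 0) :
    ∃ f : Fin s.card → G, IsUFIM f ∧ (∀ j, ∃ i ∈ s, f j = g i) ∧
      Multiset.map f univ.val = Multiset.map g s.val := by
  let e : Fin s.card ↪ Fin ℓ := (s.orderEmbOfFin rfl).toEmbedding
  have he : univ.map e = s := by
    ext i
    simp only [mem_map, mem_univ, true_and, e]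
    have := Finset.range_orderEmbOfFin s rfl
    rw [← mem_coe, ← this]; rfl
  have hsum : ∀ I : Finset (Fin s.card), ∑ i ∈ I, (g ∘ e) i = ∑ i ∈ I.map e, g i := by
    intro I; rw [sum_map]; rfl
  refine ⟨g ∘ e, isUFIM_of_interClosed (fun j => hz _) (by rw [hsum, he, hs]) ?_, ?_, ?_⟩
  · intro I _ J _ hI hJ
    rw [hsum] at *
    rw [map_inter]
    exact h _ (subset_univ _) _ (subset_univ _) hI hJ
  · intro j
    exact ⟨e j, he.subset (mem_map_of_mem _ (mem_univ _)), rfl⟩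
  · conv_rhs => rw [← he]
    rw [map_val, Multiset.map_map]

lemma inter_zero_of_const {ι : Type*} [DecidableEq ι] (p : ℕ) [Fact p.Prime] (u : ι → ZMod p)
    (A : Finset ι) (hA : A.card = p) (c : ZMod p) (hc : c ≠ 0)
    (h1 : ∀ i ∈ A, u i = c) (h2 : ∀ i ∉ A, u i = 0) (I J : Finset ι)
    (hI : ∑ i ∈ I, u i = 0) (hJ : ∑ i ∈ J, u i = 0) : ∑ i ∈ I ∩ J, u i = 0 := by
  have hu : ∀ K : Finset ι, ∑ i ∈ K, u i = ((K ∩ A).card : ZMod p) * c := by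
    intro K
    have : ∀ i ∈ K, u i = if i ∈ A then c else 0 := by
      intro i _
      split_ifs with h
      · exact h1 i h
      · exact h2 i h
    rw [sum_congr rfl this, sum_ite_mem, sum_const, nsmul_eq_mul]
  rw [hu] at hI hJ ⊢
  have hd : p ∣ (I ∩ A).card := by
    rw [← ZMod.natCast_eq_zero_iff]
    exact (mul_eq_zero.1 hI).resolve_right hc
  rcases (I ∩ A).eq_empty_or_nonempty with he | hn
  · have : I ∩ J ∩ A = ∅ := by
      rw [inter_right_comm, he, empty_inter]
    rw [this]; simp
  · have hle := Nat.le_of_dvd hn.card_pos hd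
    have hIA : I ∩ A = A := eq_of_subset_of_card_le inter_subset_right (by omega)
    have : I ∩ J ∩ A = J ∩ A := by
      rw [inter_right_comm, hIA, inter_comm]
    rw [this, hJ]

/-- Everything about orders in `ZMod (p * q)`. -/
lemma order_facts (p q : ℕ) (hp : p.Prime) (hq : q.Prime) (hpq : p ≠ q)
    (φ : ZMod (p * q) →+ ZMod p) (ψ : ZMod (p * q) →+ ZMod q)
    (hinj : ∀ x, φ x = 0 → ψ x = 0 → x = 0) (x : ZMod (p * q)) :
    (φ x ≠ 0 → ψ x = 0 → addOrderOf x = p) ∧ (φ x = 0 → ψ x ≠ 0 → addOrderOf x = q) ∧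
    (φ x ≠ 0 → ψ x ≠ 0 → addOrderOf x = p * q) := by
  have := Fact.mk hp
  have := Fact.mk hq
  have hp0 : ∀ y : ZMod p, p • y = 0 := fun y => by simp
  have hq0 : ∀ y : ZMod q, q • y = 0 := fun y => by simp
  refine ⟨fun h1 h2 => ?_, fun h1 h2 => ?_, fun h1 h2 => ?_⟩
  · refine addOrderOf_eq_prime (hinj _ (by rw [map_nsmul, hp0]) (by rw [map_nsmul, h2, nsmul_zero])) ?_
    rintro rfl; simp at h1
  · refine addOrderOf_eq_prime (hinj _ (by rw [map_nsmul, h1, nsmul_zero]) (by rw [map_nsmul, hq0])) ?_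
    rintro rfl; simp at h2
  · refine Nat.dvd_antisymm ?_ ?_
    · apply addOrderOf_dvd_of_nsmul_eq_zero
      refine hinj _ ?_ ?_
      · rw [map_nsmul, mul_nsmul', hp0]
      · rw [map_nsmul, mul_nsmul, hq0]
    · refine Nat.Coprime.mul_dvd_of_dvd_of_dvd ((Nat.coprime_primes hp hq).2 hpq) ?_ ?_
      · exact (addOrderOf_eq_prime (hp0 (φ x)) h1).symm.dvd.trans (addOrderOf_map_dvd φ x)
      · exact (addOrderOf_eq_prime (hq0 (ψ x)) h2).symm.dvd.trans (addOrderOf_map_dvd ψ x)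

lemma exists_homs (p q : ℕ) (hp : p.Prime) (hq : q.Prime) (hpq : p ≠ q) :
    ∃ (φ : ZMod (p * q) →+ ZMod p) (ψ : ZMod (p * q) →+ ZMod q),
      (∀ x, φ x = 0 → ψ x = 0 → x = 0) ∧ φ q ≠ 0 ∧ ψ q = 0 ∧ φ p = 0 ∧ ψ p ≠ 0 := by
  have hco : p.Coprime q := (Nat.coprime_primes hp hq).2 hpq
  let e := ZMod.chineseRemainder hco
  refine ⟨(AddMonoidHom.fst _ _).comp (e : ZMod (p * q) →+ ZMod p × ZMod q),
    (AddMonoidHom.snd _ _).comp (e : ZMod (p * q) →+ ZMod p × ZMod q), ?_, ?_, ?_, ?_, ?_⟩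
  · intro x h1 h2
    apply e.injective
    rw [map_zero]
    exact Prod.ext h1 h2
  · have : (e (q : ZMod (p * q))).1 = (q : ZMod p) := by rw [map_natCast]; simp
    intro h
    have h' : (e (q : ZMod (p * q))).1 = 0 := h
    rw [this, ZMod.natCast_eq_zero_iff, Nat.prime_dvd_prime_iff_eq hp hq] at h'
    exact hpq h'
  · have : (e (q : ZMod (p * q))).2 = (q : ZMod q) := by rw [map_natCast]; simp
    rw [ZMod.natCast_self] at this
    exact this
  · have : (e (p : ZMod (p * q))).1 = (p : ZMod p) := by rw [map_natCast]; simp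
    rw [ZMod.natCast_self] at this
    exact this
  · have : (e (p : ZMod (p * q))).2 = (p : ZMod q) := by rw [map_natCast]; simp
    intro h
    have h' : (e (p : ZMod (p * q))).2 = 0 := h
    rw [this, ZMod.natCast_eq_zero_iff, Nat.prime_dvd_prime_iff_eq hq hp] at h'
    exact hpq h'.symm

lemma exists_extremal (p q : ℕ) (hp : p.Prime) (hq : q.Prime) (hpq : p ≠ q) :
    ∃ g : Fin (p + q) → ZMod (p * q), IsUFIM g ∧ crossNum g = 2 := by
  have := Fact.mk hp
  have := Fact.mk hq
  obtain ⟨φ, ψ, hinj, h1, h2, h3, h4⟩ := exists_homs p q hp hq hpq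
  have o1 := (order_facts p q hp hq hpq φ ψ hinj q).1 h1 h2
  have o2 := (order_facts p q hp hq hpq φ ψ hinj p).2.1 h3 h4
  let g : Fin (p + q) → ZMod (p * q) :=
    Fin.append (fun _ : Fin p => (q : ZMod (p * q))) (fun _ : Fin q => (p : ZMod (p * q)))
  have gl : ∀ i : Fin p, g (Fin.castAdd q i) = (q : ZMod (p * q)) := fun i => by simp [g]
  have gr : ∀ i : Fin q, g (Fin.natAdd p i) = (p : ZMod (p * q)) := fun i => by simp [g]
  refine ⟨g, isUFIM_of_interClosed ?_ ?_ ?_, ?_⟩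
  · intro i
    refine Fin.addCases (fun i => ?_) (fun i => ?_) i
    · rw [gl]; intro h; rw [h, map_zero] at h1; exact h1 rfl
    · rw [gr]; intro h; rw [h, map_zero] at h4; exact h4 rfl
  · rw [Fin.sum_univ_add]
    simp only [gl, gr, sum_const, card_univ, Fintype.card_fin, nsmul_eq_mul]
    have : ((p * q : ℕ) : ZMod (p * q)) = 0 := ZMod.natCast_self _
    push_cast at this
    rw [mul_comm (q : ZMod (p * q)), this, add_zero]
  · intro I _ J _ hI hJ
    have mA : ∀ i : Fin q, Fin.natAdd p i ∉ (univ : Finset (Fin p)).map (Fin.castAddEmb q) := by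
      intro i hi
      obtain ⟨j, -, hj⟩ := mem_map.1 hi
      have := congrArg Fin.val hj
      simp at this
      omega
    have mB : ∀ i : Fin p, Fin.castAdd q i ∉ (univ : Finset (Fin q)).map (Fin.natAddEmb p) := by
      intro i hi
      obtain ⟨j, -, hj⟩ := mem_map.1 hi
      have := congrArg Fin.val hj
      simp at this
      omega
    have mA' : ∀ i : Fin p, Fin.castAdd q i ∈ (univ : Finset (Fin p)).map (Fin.castAddEmb q) :=
      fun i => mem_map.2 ⟨i, mem_univ _, rfl⟩
    have mB' : ∀ i : Fin q, Fin.natAdd p i ∈ (univ : Finset (Fin q)).map (Fin.natAddEmb p) :=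
      fun i => mem_map.2 ⟨i, mem_univ _, rfl⟩
    refine hinj _ ?_ ?_
    · rw [map_sum]
      refine inter_zero_of_const p (fun i => φ (g i)) (univ.map (Fin.castAddEmb q)) (by simp)
        (φ q) h1 ?_ ?_ I J (by rw [← map_sum, hI, map_zero]) (by rw [← map_sum, hJ, map_zero])
      · intro i
        refine Fin.addCases (fun i _ => ?_) (fun i h => absurd h (mA i)) i
        simp only [gl]
      · intro i
        refine Fin.addCases (fun i h => absurd (mA' i) h) (fun i _ => ?_) i
        simp only [gr]; exact h3
    · rw [map_sum]
      refine inter_zero_of_const q (fun i => ψ (g i)) (univ.map (Fin.natAddEmb p)) (by simp)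
        (ψ p) h4 ?_ ?_ I J (by rw [← map_sum, hI, map_zero]) (by rw [← map_sum, hJ, map_zero])
      · intro i
        refine Fin.addCases (fun i h => absurd h (mB i)) (fun i _ => ?_) i
        simp only [gr]
      · intro i
        refine Fin.addCases (fun i _ => ?_) (fun i h => absurd (mB' i) h) i
        simp only [gl]; exact h2
  · rw [crossNum, Fin.sum_univ_add]
    simp only [gl, gr, o1, o2, sum_const, card_univ, Fintype.card_fin, nsmul_eq_mul]
    have := hp.pos
    have := hq.pos
    field_simp
    norm_num

/-- The main counting result. -/
lemma counting (p q : ℕ) (hp : p.Prime) (hq : q.Prime) (hpq : p ≠ q)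
    {ℓ : ℕ} (g : Fin ℓ → ZMod (p * q)) (hg : IsUFIM g) :
    crossNum g ≤ 2 ∧ (crossNum g = 2 →
      (∀ i, addOrderOf (g i) = p ∨ addOrderOf (g i) = q) ∧
      (univ.filter (fun i => addOrderOf (g i) = p)).card = p ∧
      (univ.filter (fun i => addOrderOf (g i) = q)).card = q ∧
      ∑ i ∈ univ.filter (fun i => addOrderOf (g i) = p), g i = 0 ∧
      ∑ i ∈ univ.filter (fun i => addOrderOf (g i) = q), g i = 0) := by
  have := Fact.mk hp
  have := Fact.mk hq
  obtain ⟨φ, ψ, hinj, -⟩ := exists_homs p q hp hq hpq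
  have hord := order_facts p q hp hq hpq φ ψ hinj
  obtain ⟨h0, hic⟩ := hg.interClosed
  have hp2 := hp.two_le
  have hq2 := hq.two_le
  have hpp : p ≠ p * q := by nlinarith
  have hqq : q ≠ p * q := by nlinarith
  -- classification
  have hcl : ∀ i, (φ (g i) ≠ 0 ∧ ψ (g i) = 0 ∧ addOrderOf (g i) = p) ∨
      (φ (g i) = 0 ∧ ψ (g i) ≠ 0 ∧ addOrderOf (g i) = q) ∨
      (φ (g i) ≠ 0 ∧ ψ (g i) ≠ 0 ∧ addOrderOf (g i) = p * q) := by
    intro i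
    have hi := hg.1 i
    obtain ⟨o1, o2, o3⟩ := hord (g i)
    by_cases h1 : φ (g i) = 0
    · by_cases h2 : ψ (g i) = 0
      · exact absurd (hinj _ h1 h2) hi
      · exact Or.inr (Or.inl ⟨h1, h2, o2 h1 h2⟩)
    · by_cases h2 : ψ (g i) = 0
      · exact Or.inl ⟨h1, h2, o1 h1 h2⟩
      · exact Or.inr (Or.inr ⟨h1, h2, o3 h1 h2⟩)
  set A := univ.filter (fun i => addOrderOf (g i) = p) with hA
  set B := univ.filter (fun i => addOrderOf (g i) = q) with hB
  set C := univ.filter (fun i => addOrderOf (g i) = p * q) with hC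
  have hAm : ∀ i ∈ A, φ (g i) ≠ 0 ∧ ψ (g i) = 0 := by
    intro i hi
    have hi := (mem_filter.1 hi).2
    rcases hcl i with h | h | h
    · exact ⟨h.1, h.2.1⟩
    · exact absurd (hi.symm.trans h.2.2) hpq
    · exact absurd (hi.symm.trans h.2.2) hpp
  have hBm : ∀ i ∈ B, φ (g i) = 0 ∧ ψ (g i) ≠ 0 := by
    intro i hi
    have hi := (mem_filter.1 hi).2
    rcases hcl i with h | h | h
    · exact absurd (h.2.2.symm.trans hi) hpq
    · exact ⟨h.1, h.2.1⟩
    · exact absurd (hi.symm.trans h.2.2) hqq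
  have hCm : ∀ i ∈ C, φ (g i) ≠ 0 ∧ ψ (g i) ≠ 0 := by
    intro i hi
    have hi := (mem_filter.1 hi).2
    rcases hcl i with h | h | h
    · exact absurd (h.2.2.symm.trans hi) hpp
    · exact absurd (h.2.2.symm.trans hi) hqq
    · exact ⟨h.1, h.2.1⟩
  have hcross : crossNum g * (p * q) = q * A.card + p * B.card + C.card := by
    have hpR : (p : ℝ) ≠ 0 := by exact_mod_cast hp.ne_zero
    have hqR : (q : ℝ) ≠ 0 := by exact_mod_cast hq.ne_zero
    have hi : ∀ i, (1 : ℝ) / (addOrderOf (g i) : ℝ) * (p * q) =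
        (if addOrderOf (g i) = p then (q : ℝ) else 0) +
        (if addOrderOf (g i) = q then (p : ℝ) else 0) +
        (if addOrderOf (g i) = p * q then (1 : ℝ) else 0) := by
      intro i
      rcases hcl i with ⟨-, -, h⟩ | ⟨-, -, h⟩ | ⟨-, -, h⟩
      · rw [h, if_pos rfl, if_neg hpq, if_neg hpp]; field_simp; simp
      · rw [h, if_neg hpq.symm, if_pos rfl, if_neg hqq]; field_simp; simp
      · rw [h, if_neg hpp.symm, if_neg hqq.symm, if_pos rfl]; push_cast; field_simp; simp
    rw [crossNum, sum_mul, sum_congr rfl (fun i _ => hi i), sum_add_distrib, sum_add_distrib,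
      ← sum_filter, ← sum_filter, ← sum_filter, ← hA, ← hB, ← hC]
    simp only [sum_const, nsmul_eq_mul]
    ring
  have m1 := main_ineq φ ψ hinj (by rw [ZMod.card]; exact hp2) g univ A B C hic
    (subset_univ _) (subset_univ _) (subset_univ _) hAm hBm hCm
  have m2 := main_ineq ψ φ (fun x h1 h2 => hinj x h2 h1) (by rw [ZMod.card]; exact hq2)
    g univ B A C hic (subset_univ _) (subset_univ _) (subset_univ _)
    (fun i hi => (hBm i hi).symm) (fun i hi => (hAm i hi).symm) (fun i hi => (hCm i hi).symm)
  rw [ZMod.card, ZMod.card] at m1 m2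
  have hpqR : (0 : ℝ) < p * q := by exact_mod_cast Nat.mul_pos hp.pos hq.pos
  constructor
  · have : crossNum g * (p * q) ≤ 2 * (p * q) := by
      rw [hcross]; exact_mod_cast m1.1
    exact le_of_mul_le_mul_right this hpqR
  · intro h2
    have heq : q * A.card + p * B.card + C.card = 2 * (p * q) := by
      rw [h2] at hcross; exact_mod_cast hcross.symm
    have hBc := m1.2 heq
    have hAc := m2.2 (by linarith)
    have hCc : C.card = 0 := by rw [hBc, hAc] at heq; nlinarith
    have hCe : ∀ i, addOrderOf (g i) ≠ p * q := by
      intro i hi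
      have : i ∈ C := mem_filter.2 ⟨mem_univ _, hi⟩
      rw [card_eq_zero.1 hCc] at this
      exact notMem_empty _ this
    have hor : ∀ i, addOrderOf (g i) = p ∨ addOrderOf (g i) = q := by
      intro i
      rcases hcl i with h | h | h
      · exact Or.inl h.2.2
      · exact Or.inr h.2.2
      · exact absurd h.2.2 (hCe i)
    have hdis : Disjoint A B := disjoint_left.2 (fun i h1 h2 => (hAm i h1).1 (hBm i h2).1)
    have hun : A ∪ B = univ := by
      ext i; simpa [hA, hB] using hor i
    have hsum : ∑ i ∈ A, g i + ∑ i ∈ B, g i = 0 := by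
      rw [← sum_union hdis, hun, h0]
    have hψA : ψ (∑ i ∈ A, g i) = 0 := by
      rw [map_sum]; exact sum_eq_zero (fun i hi => (hAm i hi).2)
    have hφB : φ (∑ i ∈ B, g i) = 0 := by
      rw [map_sum]; exact sum_eq_zero (fun i hi => (hBm i hi).1)
    have hA0 : ∑ i ∈ A, g i = 0 := by
      refine hinj _ ?_ hψA
      have := congrArg φ hsum
      rwa [map_add, hφB, add_zero, map_zero] at this
    refine ⟨hor, hAc, hBc, hA0, ?_⟩
    rwa [hA0, zero_add] at hsum

/-- Remark (maximalstructurepq): let `p ≠ q` be primes and `S` a UFIM over `C_{pq}∖{0}`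
with `k(S) = K₁(C_{pq}) = 2`. Then no element of `S` has order `pq`; `S` decomposes as
`S = S_p ⊔ S_q` where `S_p` is a UFIM over the subgroup of order `p` minus `0` (i.e. all
its elements have order `p`) and similarly `S_q`; and `S` contains exactly `p` elements of
order `p` and exactly `q` elements of order `q`. -/
theorem maximal_ufim_structure_pq (p q : ℕ) (hp : p.Prime) (hq : q.Prime) (hpq : p ≠ q)
    {ℓ : ℕ} (g : Fin ℓ → ZMod (p * q)) (hg : IsUFIM g)
    (hk : crossNum g = K1 (ZMod (p * q))) :
    K1 (ZMod (p * q)) = 2 ∧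
    (∀ i, addOrderOf (g i) ≠ p * q) ∧
    (∃ (a b : ℕ) (gp : Fin a → ZMod (p * q)) (gq : Fin b → ZMod (p * q)),
      (∀ i, addOrderOf (gp i) = p) ∧ (∀ i, addOrderOf (gq i) = q) ∧
      IsUFIM gp ∧ IsUFIM gq ∧
      Multiset.map g Finset.univ.val =
        Multiset.map gp Finset.univ.val + Multiset.map gq Finset.univ.val) ∧
    (Finset.univ.filter (fun i => addOrderOf (g i) = p)).card = p ∧
    (Finset.univ.filter (fun i => addOrderOf (g i) = q)).card = q := by
  have hK : K1 (ZMod (p * q)) = 2 := by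
    obtain ⟨g₀, hg₀, hc₀⟩ := exists_extremal p q hp hq hpq
    refine IsGreatest.csSup_eq ⟨⟨_, g₀, hg₀, hc₀⟩, ?_⟩
    rintro x ⟨m, f, hf, rfl⟩
    exact (counting p q hp hq hpq f hf).1
  obtain ⟨hor, hA, hB, hA0, hB0⟩ := (counting p q hp hq hpq g hg).2 (hk.trans hK)
  have hp2 := hp.two_le
  have hq2 := hq.two_le
  obtain ⟨-, hic⟩ := hg.interClosed
  obtain ⟨gp, hgp, hgp1, hgp2⟩ := exists_restrict hg.1 hic _ hA0
  obtain ⟨gq, hgq, hgq1, hgq2⟩ := exists_restrict hg.1 hic _ hB0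
  refine ⟨hK, ?_, ⟨_, _, gp, gq, ?_, ?_, hgp, hgq, ?_⟩, hA, hB⟩
  · intro i hi
    rcases hor i with h | h
    · nlinarith
    · nlinarith
  · intro j
    obtain ⟨i, hi, h⟩ := hgp1 j
    rw [h]; exact (mem_filter.1 hi).2
  · intro j
    obtain ⟨i, hi, h⟩ := hgq1 j
    rw [h]; exact (mem_filter.1 hi).2
  · rw [hgp2, hgq2, ← Multiset.map_add]
    congr 1
    have hdis : Disjoint (univ.filter (fun i => addOrderOf (g i) = p))
        (univ.filter (fun i => addOrderOf (g i) = q)) := by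
      rw [disjoint_left]
      intro i h1 h2
      exact hpq ((mem_filter.1 h1).2.symm.trans (mem_filter.1 h2).2)
    have hun : (univ : Finset (Fin ℓ)) = (univ.filter (fun i => addOrderOf (g i) = p)).disjUnion
        (univ.filter (fun i => addOrderOf (g i) = q)) hdis := by
      ext i; simpa using hor i
    rw [hun, disjUnion_val, ← hun]
end

section
/- Let r ∈ {2,3}, let c ∈ ℝ with c > 1, let m ∈ ℕ, and let p, q be primes with r < p < q ≤ cp. If p is large enough that 1/r + (p^m − 1)/(p^{m+1} − p^m) + 1/(cp) ≥ (log_2(r·c·p^{m+1}))/p, then K_1(C_{rp^m q}) = K_1^*(C_{rp^m q}) = 2 + (p^m − 1)/(p^m − p^{m−1}). -/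
open Finset

/-! ### Auxiliary development -/

section KOneAux

/-- Intersection-closed families: nonzero terms, and the zero-sum index sets are closed
under intersection. -/
def ICl {G : Type*} [AddCommGroup G] {ι : Type*} [DecidableEq ι] (g : ι → G)
    (S : Finset ι) : Prop :=
  (∀ i ∈ S, g i ≠ 0) ∧ ∀ I ⊆ S, ∀ J ⊆ S, ∑ i ∈ I, g i = 0 → ∑ i ∈ J, g i = 0 →
    ∑ i ∈ I ∩ J, g i = 0

open Classical in
/-- The set of subset sums. -/
noncomputable def subSums {G : Type*} [AddCommGroup G] {ι : Type*} (g : ι → G)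
    (S : Finset ι) : Finset G :=
  S.powerset.image (fun I => ∑ i ∈ I, g i)

theorem mem_subSums {G : Type*} [AddCommGroup G] {ι : Type*} {g : ι → G}
    {S : Finset ι} {y : G} : y ∈ subSums g S ↔ ∃ I ⊆ S, ∑ i ∈ I, g i = y := by
  simp [subSums]

theorem card_subSums {G : Type*} [AddCommGroup G] {ι : Type*} [DecidableEq ι] (g : ι → G)
    (l : ℕ) (hl : l.Prime) (S : Finset ι) (h0 : ∀ i ∈ S, g i ≠ 0)
    (ht : ∀ i ∈ S, l • g i = 0) : min l (S.card + 1) ≤ (subSums g S).card := by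
  classical
  induction S using Finset.induction_on with
  | empty =>
    have : (subSums g ∅).Nonempty := ⟨0, mem_subSums.2 ⟨∅, by simp, by simp⟩⟩
    have := this.card_pos
    simp only [Finset.card_empty]
    omega
  | insert a S ha ih =>
    have ih' := ih (fun i hi => h0 i (by simp [hi])) (fun i hi => ht i (by simp [hi]))
    have hsub : subSums g S ⊆ subSums g (insert a S) := by
      intro y hy
      obtain ⟨I, hI, rfl⟩ := mem_subSums.1 hy
      exact mem_subSums.2 ⟨I, hI.trans (Finset.subset_insert _ _), rfl⟩
    have hshift0 : ∀ y ∈ subSums g S, g a + y ∈ subSums g (insert a S) := by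
      intro y hy
      obtain ⟨I, hI, rfl⟩ := mem_subSums.1 hy
      refine mem_subSums.2 ⟨insert a I, Finset.insert_subset_insert _ hI, ?_⟩
      rw [Finset.sum_insert (fun h => ha (hI h))]
    rw [Finset.card_insert_of_notMem ha]
    by_cases hc : ∀ y ∈ subSums g S, g a + y ∈ subSums g S
    · have hk : ∀ k : ℕ, k • g a ∈ subSums g S := by
        intro k
        induction k with
        | zero => exact mem_subSums.2 ⟨∅, by simp, by simp⟩
        | succ k ihk => rw [succ_nsmul']; exact hc _ ihk
      have hord : addOrderOf (g a) = l := by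
        haveI := Fact.mk hl
        exact addOrderOf_eq_prime (ht a (by simp)) (h0 a (by simp))
      have : l ≤ (subSums g S).card := by
        calc l = ((Finset.range l).image (fun k => k • g a)).card := by
              rw [Finset.card_image_of_injOn, Finset.card_range]
              intro x hx y hy hxy
              apply nsmul_injOn_Iio_addOrderOf (x := g a) _ _ hxy
              · rw [hord]; simpa using hx
              · rw [hord]; simpa using hy
          _ ≤ _ := Finset.card_le_card (by
              intro y hy
              obtain ⟨k, _, rfl⟩ := Finset.mem_image.1 hy
              exact hk k)
      have := Finset.card_le_card hsub
      omega
    · push Not at hc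
      obtain ⟨y, hy, hy'⟩ := hc
      have : (subSums g S).card < (subSums g (insert a S)).card :=
        Finset.card_lt_card ⟨hsub, fun h => hy' (h (hshift0 y hy))⟩
      omega

theorem subSums_cover {G : Type*} [AddCommGroup G] [Finite G] [IsAddCyclic G]
    {ι : Type*} [DecidableEq ι] (g : ι → G)
    (l : ℕ) (hl : l.Prime) (S : Finset ι) (h0 : ∀ i ∈ S, g i ≠ 0)
    (ht : ∀ i ∈ S, l • g i = 0) (hc : l ≤ S.card + 1) (y : G) (hy : l • y = 0) :
    ∃ I ⊆ S, ∑ i ∈ I, g i = y := by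
  classical
  haveI := Fintype.ofFinite G
  have h1 := card_subSums g l hl S h0 ht
  have h2 : subSums g S ⊆ Finset.univ.filter (fun a : G => l • a = 0) := by
    intro z hz
    obtain ⟨I, hI, rfl⟩ := mem_subSums.1 hz
    simp only [Finset.mem_filter, Finset.mem_univ, true_and]
    rw [Finset.smul_sum]
    exact Finset.sum_eq_zero (fun i hi => ht i (hI hi))
  have h3 := IsAddCyclic.card_nsmul_eq_zero_le (α := G) hl.pos
  have h4 := Finset.eq_of_subset_of_card_le h2 (by omega)
  apply mem_subSums.1
  rw [h4]; simpa using hy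

/-- Lemma N. -/
theorem ICl_card_le {G : Type*} [AddCommGroup G] [Finite G] [IsAddCyclic G]
    {ι : Type*} [DecidableEq ι] (g : ι → G) (l : ℕ) (hl : l.Prime) (S : Finset ι)
    (hS : ICl g S) (ht : ∀ i ∈ S, l • g i = 0) : S.card ≤ l := by
  classical
  haveI := Fintype.ofFinite G
  by_contra hcon
  push Not at hcon
  have hl2 := hl.two_le
  obtain ⟨x, hx⟩ : S.Nonempty := Finset.card_pos.1 (by omega)
  have c1 := Finset.card_erase_of_mem hx
  obtain ⟨y, hy⟩ : (S.erase x).Nonempty := Finset.card_pos.1 (by omega)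
  have c2 := Finset.card_erase_of_mem hy
  have hyS : y ∈ S := Finset.mem_of_mem_erase hy
  obtain ⟨I, hI, hIs⟩ := subSums_cover g l hl ((S.erase x).erase y)
    (fun i hi => hS.1 i (Finset.mem_of_mem_erase (Finset.mem_of_mem_erase hi)))
    (fun i hi => ht i (Finset.mem_of_mem_erase (Finset.mem_of_mem_erase hi)))
    (by omega) (-g y) (by rw [smul_neg, ht y hyS, neg_zero])
  have hyI : y ∉ I := fun h => by simpa using hI h
  set T := insert y I with hT
  have hTx : T ⊆ S.erase x := by
    intro i hi
    rcases Finset.mem_insert.1 hi with rfl | hi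
    · exact hy
    · exact Finset.mem_of_mem_erase (hI hi)
  have hTS : T ⊆ S := hTx.trans (Finset.erase_subset _ _)
  have hT0 : ∑ i ∈ T, g i = 0 := by
    rw [hT, Finset.sum_insert hyI, hIs, add_neg_cancel]
  set R := S \ T with hR
  have hRS : R ⊆ S := Finset.sdiff_subset
  have hxR : x ∈ R := Finset.mem_sdiff.2 ⟨hx, fun h => by simpa using hTx h⟩
  have hyT : y ∈ T := Finset.mem_insert_self _ _
  have hcard : R.card + T.card = S.card := Finset.card_sdiff_add_card_eq_card hTS
  have hcap0 : subSums g R ∩ subSums g T ⊆ {0} := by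
    intro z hz
    obtain ⟨hz1, hz2⟩ := Finset.mem_inter.1 hz
    obtain ⟨A, hA, hAz⟩ := mem_subSums.1 hz1
    obtain ⟨B, hB, hBz⟩ := mem_subSums.1 hz2
    have hdis : Disjoint A (T \ B) := by
      rw [Finset.disjoint_left]
      intro a ha hb
      exact (Finset.mem_sdiff.1 (hA ha)).2 (Finset.mem_sdiff.1 hb).1
    have hTB : ∑ i ∈ T \ B, g i = - z := by
      have := Finset.sum_sdiff (f := g) hB
      rw [hT0, hBz] at this
      exact eq_neg_of_add_eq_zero_left this
    have h0 : ∑ i ∈ A ∪ (T \ B), g i = 0 := by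
      rw [Finset.sum_union hdis, hAz, hTB, add_neg_cancel]
    have h1 := hS.2 _ (Finset.union_subset (hA.trans hRS) (Finset.sdiff_subset.trans hTS))
      T hTS h0 hT0
    have h2 : (A ∪ (T \ B)) ∩ T = T \ B := by
      ext a
      simp only [Finset.mem_inter, Finset.mem_union, Finset.mem_sdiff]
      have : a ∈ A → a ∉ T := fun ha => (Finset.mem_sdiff.1 (hA ha)).2
      tauto
    rw [h2, hTB, neg_eq_zero] at h1
    simp [h1]
  have hmem0 : ∀ U : Finset ι, (0 : G) ∈ subSums g U := fun U =>
    mem_subSums.2 ⟨∅, by simp, by simp⟩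
  have hsingle : ∀ (U : Finset ι) (u : ι), u ∈ U → g u ∈ subSums g U := fun U u hu =>
    mem_subSums.2 ⟨{u}, by simpa using hu, by simp⟩
  have two : ∀ (U : Finset ι), U ⊆ S → ∀ u ∈ U, 2 ≤ (subSums g U).card := by
    intro U hU u hu
    have : ({0, g u} : Finset G) ⊆ subSums g U := by
      intro z hz
      simp only [Finset.mem_insert, Finset.mem_singleton] at hz
      rcases hz with rfl | rfl
      · exact hmem0 U
      · exact hsingle U u hu
    have h := Finset.card_le_card this
    rwa [Finset.card_pair (hS.1 u (hU hu)).symm] at h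
  have k1 := two R hRS x hxR
  have k2 := two T hTS y hyT
  have m1 := card_subSums g l hl R (fun i hi => hS.1 i (hRS hi)) (fun i hi => ht i (hRS hi))
  have m2 := card_subSums g l hl T (fun i hi => hS.1 i (hTS hi)) (fun i hi => ht i (hTS hi))
  have hun : subSums g R ∪ subSums g T ⊆ Finset.univ.filter (fun a : G => l • a = 0) := by
    intro z hz
    have : ∃ I ⊆ S, ∑ i ∈ I, g i = z := by
      rcases Finset.mem_union.1 hz with hz | hz
      · obtain ⟨I, hI, h⟩ := mem_subSums.1 hz
        exact ⟨I, hI.trans hRS, h⟩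
      · obtain ⟨I, hI, h⟩ := mem_subSums.1 hz
        exact ⟨I, hI.trans hTS, h⟩
    obtain ⟨I, hI, rfl⟩ := this
    simp only [Finset.mem_filter, Finset.mem_univ, true_and]
    rw [Finset.smul_sum]
    exact Finset.sum_eq_zero (fun i hi => ht i (hI hi))
  have h3 := IsAddCyclic.card_nsmul_eq_zero_le (α := G) hl.pos
  have h4 := Finset.card_le_card hun
  have h5 := Finset.card_union_add_card_inter (subSums g R) (subSums g T)
  have h6 := Finset.card_le_card hcap0
  rw [Finset.card_singleton] at h6
  omega

/-- No merge is possible without losing weight. -/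
def Reduced {G : Type*} [AddCommGroup G] {ι : Type*} (g : ι → G) (S : Finset ι) : Prop :=
  ∀ Y ⊆ S, 2 ≤ Y.card → ∑ i ∈ Y, g i ≠ 0 →
    (1 : ℝ) / addOrderOf (∑ i ∈ Y, g i) < ∑ i ∈ Y, (1 : ℝ) / addOrderOf (g i)

theorem ICl_reduce {G : Type*} [AddCommGroup G] {ι : Type*} [DecidableEq ι] (N : ℕ) (K : ℝ)
    (H : ∀ (g : ι → G) (S : Finset ι), ICl g S → (∀ i ∈ S, N • g i = 0) → Reduced g S →
      ∑ i ∈ S, (1 : ℝ) / addOrderOf (g i) ≤ K) :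
    ∀ (k : ℕ) (g : ι → G) (S : Finset ι), S.card = k → ICl g S → (∀ i ∈ S, N • g i = 0) →
      ∑ i ∈ S, (1 : ℝ) / addOrderOf (g i) ≤ K := by
  intro k
  induction k using Nat.strong_induction_on with
  | _ k ih =>
  intro g S hk hS hN
  by_cases hred : Reduced g S
  · exact H g S hS hN hred
  unfold Reduced at hred
  push Not at hred
  obtain ⟨Y, hYS, hY2, hY0, hYw⟩ := hred
  obtain ⟨y, hy⟩ : Y.Nonempty := Finset.card_pos.1 (by omega)
  set s := ∑ i ∈ Y, g i with hs
  set g' := Function.update g y s with hg'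
  set S' := (S \ Y) ∪ {y} with hS'
  have hyn : y ∉ S \ Y := fun h => (Finset.mem_sdiff.1 h).2 hy
  have hg'y : g' y = s := by simp [hg']
  have hg'o : ∀ i, i ≠ y → g' i = g i := fun i hi => by simp [hg', hi]
  have hg'sum : ∀ I : Finset ι, y ∉ I → ∑ i ∈ I, g' i = ∑ i ∈ I, g i := fun I hI =>
    Finset.sum_congr rfl (fun i hi => hg'o i (fun h => hI (h ▸ hi)))
  have hdisj : Disjoint (S \ Y) {y} := by simpa using fun _ => hy
  -- lifting of index sets
  set L : Finset ι → Finset ι := fun I => if y ∈ I then I ∪ Y else I with hL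
  have hLS : ∀ I ⊆ S', L I ⊆ S := by
    intro I hI i hi
    have h1 : ∀ j ∈ I, j ∈ S := by
      intro j hj
      have := hI hj
      simp only [hS', Finset.mem_union, Finset.mem_sdiff, Finset.mem_singleton] at this
      rcases this with h | rfl
      · exact h.1
      · exact hYS hy
    by_cases hyI : y ∈ I
    · simp only [hL, hyI, if_true, Finset.mem_union] at hi
      rcases hi with h | h
      · exact h1 i h
      · exact hYS h
    · simp only [hL, hyI, if_false] at hi
      exact h1 i hi
  have hLsum : ∀ I ⊆ S', ∑ i ∈ L I, g i = ∑ i ∈ I, g' i := by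
    intro I hI
    by_cases hyI : y ∈ I
    · have e1 : L I = (I.erase y) ∪ Y := by
        simp only [hL, hyI, if_true]
        ext i
        simp only [Finset.mem_union, Finset.mem_erase]
        by_cases h : i = y
        · subst h; simp [hy]
        · simp [h]
      have e2 : Disjoint (I.erase y) Y := by
        rw [Finset.disjoint_left]
        intro i hi hiY
        have h := hI (Finset.mem_of_mem_erase hi)
        simp only [hS', Finset.mem_union, Finset.mem_sdiff, Finset.mem_singleton] at h
        rcases h with h | h
        · exact h.2 hiY
        · exact (Finset.mem_erase.1 hi).1 h
      rw [e1, Finset.sum_union e2, ← hs, ← Finset.add_sum_erase I g' hyI, hg'y,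
        hg'sum _ (Finset.notMem_erase y I), add_comm]
    · simp only [hL, hyI, if_false]
      exact (hg'sum I hyI).symm
  have hLint : ∀ I ⊆ S', ∀ J ⊆ S', L (I ∩ J) = L I ∩ L J := by
    intro I hI J hJ
    have hIY : ∀ i ∈ I, i ∈ Y → i = y := by
      intro i hi hiY
      have h := hI hi
      simp only [hS', Finset.mem_union, Finset.mem_sdiff, Finset.mem_singleton] at h
      tauto
    have hJY : ∀ i ∈ J, i ∈ Y → i = y := by
      intro i hi hiY
      have h := hJ hi
      simp only [hS', Finset.mem_union, Finset.mem_sdiff, Finset.mem_singleton] at h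
      tauto
    ext i
    by_cases h1 : y ∈ I <;> by_cases h2 : y ∈ J <;>
      simp only [hL, h1, h2, Finset.mem_inter, Finset.mem_union, if_true, if_false, and_true,
        and_false, true_and, false_and]
    · tauto
    · have : i ∈ J → i ∈ Y → False := fun a b => h2 (hJY i a b ▸ a)
      tauto
    · have : i ∈ I → i ∈ Y → False := fun a b => h1 (hIY i a b ▸ a)
      tauto
  have hcard : S'.card < k := by
    have h1 := Finset.card_sdiff_add_card_eq_card hYS
    have h2 : S'.card = (S \ Y).card + 1 := by
      rw [hS', Finset.card_union_of_disjoint hdisj, Finset.card_singleton]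
    omega
  have hsN : N • s = 0 := by
    rw [hs, Finset.smul_sum]
    exact Finset.sum_eq_zero (fun i hi => hN i (hYS hi))
  have hres := ih S'.card hcard g' S' rfl ⟨?_, ?_⟩ ?_
  · refine le_trans ?_ hres
    rw [hS', Finset.sum_union hdisj, Finset.sum_singleton, hg'y,
      ← Finset.sum_sdiff hYS]
    have : ∑ i ∈ S \ Y, (1 : ℝ) / addOrderOf (g' i) = ∑ i ∈ S \ Y, (1 : ℝ) / addOrderOf (g i) :=
      Finset.sum_congr rfl (fun i hi => by rw [hg'o i (fun h => hyn (h ▸ hi))])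
    rw [this]
    linarith
  · intro i hi
    by_cases h : i = y
    · rw [h, hg'y]; exact hY0
    · rw [hg'o i h]
      apply hS.1
      simp only [hS', Finset.mem_union, Finset.mem_sdiff, Finset.mem_singleton] at hi
      tauto
  · intro I hI J hJ hI0 hJ0
    rw [← hLsum _ (Finset.inter_subset_left.trans hI), hLint I hI J hJ]
    apply hS.2 _ (hLS I hI) _ (hLS J hJ)
    · rw [hLsum I hI, hI0]
    · rw [hLsum J hJ, hJ0]
  · intro i hi
    by_cases h : i = y
    · rw [h, hg'y]; exact hsN
    · rw [hg'o i h]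
      apply hN
      simp only [hS', Finset.mem_union, Finset.mem_sdiff, Finset.mem_singleton] at hi
      tauto

/-- In a reduced family there are at most `l` terms of order `d`, for a prime `l ∣ d`. -/
theorem Reduced_count {G : Type*} [AddCommGroup G] [Finite G] [IsAddCyclic G]
    {ι : Type*} [DecidableEq ι] (g : ι → G) (S : Finset ι) (hS : ICl g S) (hR : Reduced g S)
    (d l : ℕ) (hl : l.Prime) (hd : 0 < d) (hld : l ∣ d) :
    (S.filter (fun i => addOrderOf (g i) = d)).card ≤ l := by
  classical
  set W := S.filter (fun i => addOrderOf (g i) = d) with hW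
  have hWS : W ⊆ S := Finset.filter_subset _ _
  have hWd : ∀ i ∈ W, addOrderOf (g i) = d := fun i hi => (Finset.mem_filter.1 hi).2
  obtain ⟨e, rfl⟩ := hld
  have he : 0 < e := Nat.pos_of_mul_pos_left hd
  have h0 : ∀ i ∈ W, e • g i ≠ 0 := by
    intro i hi h
    have h1 := Nat.le_of_dvd he (addOrderOf_dvd_iff_nsmul_eq_zero.2 h)
    rw [hWd i hi] at h1
    have := hl.two_le
    nlinarith
  have hlt : ∀ i ∈ W, l • (e • g i) = 0 := by
    intro i hi
    rw [smul_smul, ← hWd i hi]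
    exact addOrderOf_nsmul_eq_zero _
  have key : ∀ (k : ℕ) (I : Finset ι), I.card = k → I ⊆ W → ∑ i ∈ I, e • g i = 0 →
      ∑ i ∈ I, g i = 0 := by
    intro k
    induction k using Nat.strong_induction_on with
    | _ k ih =>
    intro I hk hI hI0
    by_cases hIe : I = ∅
    · simp [hIe]
    obtain ⟨x, hx⟩ := Finset.nonempty_iff_ne_empty.2 hIe
    have c1 := Finset.card_erase_of_mem hx
    by_cases hIl : I.card ≤ l
    · by_contra hne
      have h2 : 2 ≤ I.card := by
        by_contra hlt2
        have : I.card = 1 := by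
          have := Finset.card_pos.2 ⟨x, hx⟩
          omega
        obtain ⟨a, rfl⟩ := Finset.card_eq_one.1 this
        rw [Finset.sum_singleton] at hI0
        exact h0 a (hI (by simp)) hI0
      have h3 := hR I (hI.trans hWS) h2 hne
      have h4 : ∑ i ∈ I, (1 : ℝ) / addOrderOf (g i) = I.card * (1 / ((l * e : ℕ) : ℝ)) := by
        rw [Finset.sum_congr rfl (fun i hi => by rw [hWd i (hI hi)]), Finset.sum_const,
          nsmul_eq_mul]
      have h5 : addOrderOf (∑ i ∈ I, g i) ≤ e := by
        apply Nat.le_of_dvd he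
        rw [addOrderOf_dvd_iff_nsmul_eq_zero, Finset.smul_sum, hI0]
      have h6 : (0 : ℝ) < addOrderOf (∑ i ∈ I, g i) := by
        exact_mod_cast addOrderOf_pos _
      have h7 : (1 : ℝ) / e ≤ 1 / addOrderOf (∑ i ∈ I, g i) :=
        one_div_le_one_div_of_le h6 (by exact_mod_cast h5)
      have hl0 : (0 : ℝ) < l := by exact_mod_cast hl.pos
      have he0 : (0 : ℝ) < e := by exact_mod_cast he
      have h8 : (I.card : ℝ) * (1 / ((l * e : ℕ) : ℝ)) ≤ 1 / e := by
        have : (I.card : ℝ) ≤ l := by exact_mod_cast hIl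
        push_cast
        rw [mul_one_div, div_le_div_iff₀ (by positivity) he0]
        nlinarith
      linarith
    · push Not at hIl
      have hl2 := hl.two_le
      obtain ⟨y, hy⟩ : (I.erase x).Nonempty := Finset.card_pos.1 (by omega)
      have c2 := Finset.card_erase_of_mem hy
      have hyI : y ∈ I := Finset.mem_of_mem_erase hy
      have hsub : (I.erase x).erase y ⊆ I :=
        (Finset.erase_subset _ _).trans (Finset.erase_subset _ _)
      obtain ⟨J, hJ, hJs⟩ := subSums_cover (fun i => e • g i) l hl ((I.erase x).erase y)
        (fun i hi => h0 i (hI (hsub hi))) (fun i hi => hlt i (hI (hsub hi)))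
        (by omega) (-(e • g y)) (by rw [smul_neg, hlt y (hI hyI), neg_zero])
      have hyJ : y ∉ J := fun h => by simpa using hJ h
      have hxJ : x ∉ insert y J := by
        intro h
        rcases Finset.mem_insert.1 h with h | h
        · subst h; simp at hy
        · have := hJ h
          simp at this
      have hTI : insert y J ⊆ I := Finset.insert_subset hyI (hJ.trans hsub)
      have hT0 : ∑ i ∈ insert y J, e • g i = 0 := by
        rw [Finset.sum_insert hyJ, hJs, add_neg_cancel]
      have hT1 : ∑ i ∈ I \ insert y J, e • g i = 0 := by
        have := Finset.sum_sdiff (f := fun i => e • g i) hTI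
        rw [hT0, hI0, add_zero] at this
        exact this
      have d1 : (insert y J).card < k := by
        rw [← hk]
        exact Finset.card_lt_card ⟨hTI, fun h => hxJ (h hx)⟩
      have d2 : (I \ insert y J).card < k := by
        rw [← hk]
        refine Finset.card_lt_card ⟨Finset.sdiff_subset, fun h => ?_⟩
        exact (Finset.mem_sdiff.1 (h hyI)).2 (Finset.mem_insert_self _ _)
      rw [← Finset.sum_sdiff hTI, ih _ d1 _ rfl (hTI.trans hI) hT0,
        ih _ d2 _ rfl (Finset.sdiff_subset.trans hI) hT1, add_zero]
  apply ICl_card_le (fun i => e • g i) l hl W ⟨h0, ?_⟩ hlt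
  intro I hI J hJ hI0 hJ0
  have := hS.2 I (hI.trans hWS) J (hJ.trans hWS) (key _ I rfl hI hI0) (key _ J rfl hJ hJ0)
  rw [← Finset.smul_sum, this, smul_zero]

/-- Passing to the quotient by the `l`-torsion. -/
theorem ICl_proj {G : Type*} [AddCommGroup G] [Finite G] [IsAddCyclic G]
    {ι : Type*} [DecidableEq ι] (g : ι → G) (S : Finset ι) (hS : ICl g S)
    (l : ℕ) (hl : l.Prime)
    (hc : l ≤ (S.filter (fun i => addOrderOf (g i) = l)).card + 1) :
    ICl (fun i => l • g i) (S \ S.filter (fun i => addOrderOf (g i) = l)) := by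
  set W := S.filter (fun i => addOrderOf (g i) = l) with hW
  have hWS : W ⊆ S := Finset.filter_subset _ _
  have hWd : ∀ i ∈ W, addOrderOf (g i) = l := fun i hi => (Finset.mem_filter.1 hi).2
  have hWt : ∀ i ∈ W, l • g i = 0 := by
    intro i hi
    rw [← addOrderOf_dvd_iff_nsmul_eq_zero, hWd i hi]
  have hlift : ∀ I ⊆ S \ W, ∑ i ∈ I, l • g i = 0 → ∃ J ⊆ W, ∑ i ∈ I ∪ J, g i = 0 := by
    intro I hI h0
    obtain ⟨J, hJ, hJs⟩ := subSums_cover g l hl W (fun i hi => hS.1 i (hWS hi)) hWt hc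
      (- ∑ i ∈ I, g i) (by rw [smul_neg, Finset.smul_sum, h0, neg_zero])
    refine ⟨J, hJ, ?_⟩
    rw [Finset.sum_union, hJs, add_neg_cancel]
    rw [Finset.disjoint_left]
    intro a ha hb
    exact (Finset.mem_sdiff.1 (hI ha)).2 (hJ hb)
  refine ⟨?_, ?_⟩
  · intro i hi h0
    obtain ⟨hiS, hiW⟩ := Finset.mem_sdiff.1 hi
    haveI := Fact.mk hl
    exact hiW (Finset.mem_filter.2 ⟨hiS, addOrderOf_eq_prime h0 (hS.1 i hiS)⟩)
  · intro I hI J hJ hI0 hJ0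
    obtain ⟨A, hA, hAs⟩ := hlift I hI hI0
    obtain ⟨B, hB, hBs⟩ := hlift J hJ hJ0
    have h := hS.2 _ (Finset.union_subset (hI.trans Finset.sdiff_subset) (hA.trans hWS))
      _ (Finset.union_subset (hJ.trans Finset.sdiff_subset) (hB.trans hWS)) hAs hBs
    have e : (I ∪ A) ∩ (J ∪ B) = (I ∩ J) ∪ (A ∩ B) := by
      ext i
      have h1 : i ∈ I → i ∉ W := fun h => (Finset.mem_sdiff.1 (hI h)).2
      have h2 : i ∈ J → i ∉ W := fun h => (Finset.mem_sdiff.1 (hJ h)).2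
      have h3 : i ∈ A → i ∈ W := fun h => hA h
      have h4 : i ∈ B → i ∈ W := fun h => hB h
      simp only [Finset.mem_inter, Finset.mem_union]
      tauto
    have hd : Disjoint (I ∩ J) (A ∩ B) := by
      rw [Finset.disjoint_left]
      intro a ha hb
      exact (Finset.mem_sdiff.1 (hI (Finset.mem_inter.1 ha).1)).2 (hA (Finset.mem_inter.1 hb).1)
    rw [e, Finset.sum_union hd] at h
    have h' := congrArg (fun z => l • z) h
    simp only [smul_add, smul_zero, Finset.smul_sum] at h'
    rw [Finset.sum_eq_zero (s := A ∩ B)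
      (fun i hi => hWt i (hA (Finset.mem_inter.1 hi).1)), add_zero] at h'
    exact h'

/-- Number of terms of order `d`, divided by `d`. -/
noncomputable def ordW {G : Type*} [AddCommGroup G] {ι : Type*} (g : ι → G)
    (S : Finset ι) (d : ℕ) : ℝ :=
  ((S.filter (fun i => addOrderOf (g i) = d)).card : ℝ) / d

theorem sum_filter_ord {G : Type*} [AddCommGroup G] {ι : Type*} (g : ι → G)
    (S : Finset ι) (d : ℕ) :
    ∑ i ∈ S.filter (fun i => addOrderOf (g i) = d), (1 : ℝ) / addOrderOf (g i) = ordW g S d := by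
  rw [Finset.sum_congr rfl (fun i hi => by rw [(Finset.mem_filter.1 hi).2]), Finset.sum_const,
    nsmul_eq_mul, mul_one_div, ordW]

theorem wt_eq {G : Type*} [AddCommGroup G] {ι : Type*} (g : ι → G)
    (S : Finset ι) (N : ℕ) (hN : N ≠ 0) (h : ∀ i ∈ S, N • g i = 0) :
    ∑ i ∈ S, (1 : ℝ) / addOrderOf (g i) = ∑ d ∈ N.divisors, ordW g S d := by
  rw [← Finset.sum_fiberwise_of_maps_to (t := N.divisors) (g := fun i => addOrderOf (g i))]
  · exact Finset.sum_congr rfl (fun d _ => sum_filter_ord g S d)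
  · intro i hi
    exact Nat.mem_divisors.2 ⟨addOrderOf_dvd_iff_nsmul_eq_zero.2 (h i hi), hN⟩

theorem ordW_one {G : Type*} [AddCommGroup G] {ι : Type*} [DecidableEq ι] (g : ι → G)
    (S : Finset ι) (hS : ICl g S) : ordW g S 1 = 0 := by
  have : S.filter (fun i => addOrderOf (g i) = 1) = ∅ := by
    rw [Finset.filter_eq_empty_iff]
    intro i hi h
    exact hS.1 i hi (AddMonoid.addOrderOf_eq_one_iff.1 h)
  simp [ordW, this]

theorem ordW_le {G : Type*} [AddCommGroup G] [Finite G] [IsAddCyclic G]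
    {ι : Type*} [DecidableEq ι] (g : ι → G) (S : Finset ι) (hS : ICl g S) (hR : Reduced g S)
    (d l : ℕ) (hl : l.Prime) (hd : 0 < d) (hld : l ∣ d) : ordW g S d ≤ (l : ℝ) / d := by
  unfold ordW
  have : ((S.filter (fun i => addOrderOf (g i) = d)).card : ℝ) ≤ l := by
    exact_mod_cast Reduced_count g S hS hR d l hl hd hld
  gcongr

theorem sum_divisors_mul_prime (F : ℕ → ℝ) (N q : ℕ) (hq : q.Prime) (hN : N.Coprime q) :
    ∑ d ∈ (N * q).divisors, F d = ∑ d ∈ N.divisors, (F d + F (d * q)) := by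
  have h := Nat.Coprime.mul_injOn_divisors hN
  rw [Nat.divisors_mul, Finset.mul_def, Finset.sum_image h, Finset.sum_product]
  apply Finset.sum_congr rfl
  intro d _
  rw [hq.sum_divisors]
  simp [add_comm]

/-- `K₁*` of `C_{p^m}` as a sum. -/
noncomputable def KS (p m : ℕ) : ℝ := ∑ j ∈ Finset.range m, (p : ℝ) / (p : ℝ) ^ (j + 1)

theorem rest_le {G : Type*} [AddCommGroup G] [Finite G]
    {ι : Type*} (g : ι → G) (S : Finset ι) (l : ℕ) :
    ∑ i ∈ S, (1 : ℝ) / addOrderOf (g i) ≤ ∑ i ∈ S, (1 : ℝ) / addOrderOf (l • g i) := by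
  apply Finset.sum_le_sum
  intro i _
  apply one_div_le_one_div_of_le
  · exact_mod_cast addOrderOf_pos _
  · have : addOrderOf (l • g i) ∣ addOrderOf (g i) := by
      rw [addOrderOf_dvd_iff_nsmul_eq_zero, smul_comm, addOrderOf_nsmul_eq_zero, smul_zero]
    exact_mod_cast Nat.le_of_dvd (addOrderOf_pos _) this

/-- The projection step for the bounds. -/
theorem proj_bound {G : Type*} [AddCommGroup G] [Finite G] [IsAddCyclic G]
    {ι : Type*} [DecidableEq ι] (g : ι → G) (S : Finset ι) (hS : ICl g S) (hR : Reduced g S)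
    (l N : ℕ) (hl : l.Prime) (K : ℝ) (hN : ∀ i ∈ S, (N * l) • g i = 0)
    (H : ∀ (g : ι → G) (S : Finset ι), ICl g S → (∀ i ∈ S, N • g i = 0) →
      ∑ i ∈ S, (1 : ℝ) / addOrderOf (g i) ≤ K)
    (hc : l ≤ (S.filter (fun i => addOrderOf (g i) = l)).card + 1) :
    ∑ i ∈ S, (1 : ℝ) / addOrderOf (g i) ≤ K + 1 := by
  have h1 := ICl_proj g S hS l hl hc
  have h2 := H _ _ h1 (fun i hi => by
    rw [smul_smul]; exact hN i (Finset.mem_sdiff.1 hi).1)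
  have h3 := rest_le g (S \ S.filter (fun i => addOrderOf (g i) = l)) l
  have h4 := ordW_le g S hS hR l l hl hl.pos dvd_rfl
  rw [div_self (by exact_mod_cast hl.ne_zero), ← sum_filter_ord] at h4
  rw [← Finset.sum_sdiff (Finset.filter_subset (fun i => addOrderOf (g i) = l) S)]
  linarith

theorem bound_p {G : Type*} [AddCommGroup G] [Finite G] [IsAddCyclic G]
    {ι : Type*} [DecidableEq ι] (p m : ℕ) (hp : p.Prime) (g : ι → G) (S : Finset ι)
    (hS : ICl g S) (hN : ∀ i ∈ S, (p ^ m) • g i = 0) :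
    ∑ i ∈ S, (1 : ℝ) / addOrderOf (g i) ≤ KS p m := by
  refine ICl_reduce (p ^ m) _ ?_ S.card g S rfl hS hN
  clear hS hN g S
  intro g S hS hN hR
  rw [wt_eq g S _ (pow_ne_zero _ hp.ne_zero) hN, Nat.sum_divisors_prime_pow hp,
    Finset.sum_range_succ', pow_zero, ordW_one g S hS, add_zero, KS]
  apply Finset.sum_le_sum
  intro j _
  have := ordW_le g S hS hR (p ^ (j + 1)) p hp (pow_pos hp.pos _) (dvd_pow_self _ (by omega))
  push_cast at this
  exact this

theorem KS_nonneg (p m : ℕ) : 0 ≤ KS p m := Finset.sum_nonneg (fun _ _ => by positivity)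

theorem KS_eq (p m : ℕ) (hp : 2 ≤ p) (hm : 1 ≤ m) :
    KS p m = ((p : ℝ) ^ m - 1) / ((p : ℝ) ^ m - (p : ℝ) ^ (m - 1)) := by
  obtain ⟨k, rfl⟩ : ∃ k, m = k + 1 := ⟨m - 1, by omega⟩
  have hp' : (2 : ℝ) ≤ p := by exact_mod_cast hp
  have hp0 : (p : ℝ) ≠ 0 := by linarith
  have hp1 : (p : ℝ) - 1 ≠ 0 := by intro h; linarith
  clear hm
  have e : (p : ℝ) ^ (k + 1) - (p : ℝ) ^ (k + 1 - 1) = (p : ℝ) ^ k * (p - 1) := by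
    simp only [Nat.add_sub_cancel]; ring
  rw [e, eq_div_iff (mul_ne_zero (pow_ne_zero _ hp0) hp1)]
  clear e
  induction k with
  | zero => simp [KS]; field_simp
  | succ k ih =>
    have : KS p (k + 1 + 1) = KS p (k + 1) + (p : ℝ) / (p : ℝ) ^ (k + 1 + 1) := by
      simp [KS, Finset.sum_range_succ]
    rw [this]
    have h2 : (p : ℝ) / (p : ℝ) ^ (k + 1 + 1) * (p : ℝ) ^ (k + 1) = 1 := by
      field_simp
      ring
    calc _ = (KS p (k + 1) * ((p : ℝ) ^ k * (p - 1))) * p +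
          ((p : ℝ) / (p : ℝ) ^ (k + 1 + 1) * (p : ℝ) ^ (k + 1)) * (p - 1) := by ring
      _ = _ := by rw [ih, h2]; ring

theorem KS_le (p m : ℕ) (hp : 2 ≤ p) (hm : 1 ≤ m) : KS p m ≤ (p : ℝ) / (p - 1) := by
  rw [KS_eq p m hp hm]
  have hp' : (2 : ℝ) ≤ p := by exact_mod_cast hp
  obtain ⟨k, rfl⟩ : ∃ k, m = k + 1 := ⟨m - 1, by omega⟩
  simp only [Nat.add_sub_cancel]
  have hk : (0 : ℝ) < (p : ℝ) ^ k := by positivity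
  have e : (p : ℝ) ^ (k + 1) - (p : ℝ) ^ k = (p : ℝ) ^ k * (p - 1) := by ring
  rw [e, div_le_div_iff₀ (by apply mul_pos hk; linarith) (by linarith)]
  have : (p : ℝ) ^ (k + 1) = (p : ℝ) ^ k * p := by ring
  rw [this]
  nlinarith

theorem bound_pq {G : Type*} [AddCommGroup G] [Finite G] [IsAddCyclic G]
    {ι : Type*} [DecidableEq ι] (p m q : ℕ) (hp : p.Prime) (hq : q.Prime) (hpq : p < q)
    (hm : 1 ≤ m) (g : ι → G) (S : Finset ι)
    (hS : ICl g S) (hN : ∀ i ∈ S, (p ^ m * q) • g i = 0) :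
    ∑ i ∈ S, (1 : ℝ) / addOrderOf (g i) ≤ KS p m + 1 := by
  refine ICl_reduce (p ^ m * q) _ ?_ S.card g S rfl hS hN
  clear hS hN g S
  intro g S hS hN hR
  have hq0 : (0 : ℝ) < q := by exact_mod_cast hq.pos
  have hp0 : (0 : ℝ) < p := by exact_mod_cast hp.pos
  by_cases hc : q ≤ (S.filter (fun i => addOrderOf (g i) = q)).card + 1
  · exact proj_bound g S hS hR q (p ^ m) hq _ hN (fun g S => bound_p p m hp g S) hc
  have hcop : (p ^ m).Coprime q :=
    Nat.Coprime.pow_left _ ((Nat.coprime_primes hp hq).2 hpq.ne)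
  rw [wt_eq g S _ (mul_ne_zero (pow_ne_zero _ hp.ne_zero) hq.ne_zero) hN,
    sum_divisors_mul_prime _ _ _ hq hcop, Nat.sum_divisors_prime_pow hp,
    Finset.sum_range_succ', pow_zero, ordW_one g S hS, one_mul, zero_add]
  have h1 : ordW g S q ≤ 1 - 2 / q := by
    unfold ordW
    have : ((S.filter (fun i => addOrderOf (g i) = q)).card : ℝ) + 2 ≤ q := by
      exact_mod_cast (by omega :
        (S.filter (fun i => addOrderOf (g i) = q)).card + 2 ≤ q)
    rw [div_le_iff₀ hq0]
    field_simp
    linarith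
  have h2 : ∑ j ∈ Finset.range m, (ordW g S (p ^ (j + 1)) + ordW g S (p ^ (j + 1) * q)) ≤
      KS p m + KS p m / q := by
    rw [KS, Finset.sum_div, ← Finset.sum_add_distrib]
    apply Finset.sum_le_sum
    intro j _
    have a := ordW_le g S hS hR (p ^ (j + 1)) p hp (pow_pos hp.pos _) (dvd_pow_self _ (by omega))
    have b := ordW_le g S hS hR (p ^ (j + 1) * q) p hp
      (Nat.mul_pos (pow_pos hp.pos _) hq.pos)
      (Dvd.dvd.mul_right (dvd_pow_self _ (by omega)) _)
    push_cast at a b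
    rw [div_div]
    linarith
  have h3 : KS p m ≤ 2 := by
    refine (KS_le p m hp.two_le hm).trans ?_
    have : (2 : ℝ) ≤ p := by exact_mod_cast hp.two_le
    rw [div_le_iff₀ (by linarith)]
    linarith
  have h4 : KS p m / q ≤ 2 / q := by gcongr
  linarith

theorem bound_pqr {G : Type*} [AddCommGroup G] [Finite G] [IsAddCyclic G]
    {ι : Type*} [DecidableEq ι] (p m q r : ℕ) (hp : p.Prime) (hq : q.Prime) (hpq : p < q)
    (hm : 1 ≤ m) (hr : r = 2 ∨ r = 3) (hp5 : 5 ≤ p) (g : ι → G) (S : Finset ι)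
    (hS : ICl g S) (hN : ∀ i ∈ S, (p ^ m * q * r) • g i = 0) :
    ∑ i ∈ S, (1 : ℝ) / addOrderOf (g i) ≤ KS p m + 1 + 1 := by
  refine ICl_reduce (p ^ m * q * r) _ ?_ S.card g S rfl hS hN
  clear hS hN g S
  intro g S hS hN hR
  have hrp : r.Prime := by rcases hr with rfl | rfl <;> norm_num
  have hr3 : r ≤ 3 := by omega
  have hq0 : (0 : ℝ) < q := by exact_mod_cast hq.pos
  have hp0 : (0 : ℝ) < p := by exact_mod_cast hp.pos
  have hr0 : (0 : ℝ) < r := by exact_mod_cast hrp.pos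
  by_cases hc : r ≤ (S.filter (fun i => addOrderOf (g i) = r)).card + 1
  · exact proj_bound g S hS hR r (p ^ m * q) hrp _ hN
      (fun g S => bound_pq p m q hp hq hpq hm g S) hc
  have hcop : (p ^ m).Coprime q :=
    Nat.Coprime.pow_left _ ((Nat.coprime_primes hp hq).2 hpq.ne)
  have hcop2 : (p ^ m * q).Coprime r :=
    Nat.Coprime.mul_left (Nat.Coprime.pow_left _ ((Nat.coprime_primes hp hrp).2 (by omega)))
      ((Nat.coprime_primes hq hrp).2 (by omega))
  rw [wt_eq g S _ (mul_ne_zero (mul_ne_zero (pow_ne_zero _ hp.ne_zero) hq.ne_zero)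
      hrp.ne_zero) hN,
    sum_divisors_mul_prime _ _ _ hrp hcop2,
    sum_divisors_mul_prime _ _ _ hq hcop, Nat.sum_divisors_prime_pow hp,
    Finset.sum_range_succ', pow_zero, ordW_one g S hS, one_mul, one_mul, zero_add]
  have h1 : ordW g S r ≤ 1 - 2 / r := by
    unfold ordW
    have : ((S.filter (fun i => addOrderOf (g i) = r)).card : ℝ) + 2 ≤ r := by
      exact_mod_cast (by omega :
        (S.filter (fun i => addOrderOf (g i) = r)).card + 2 ≤ r)
    rw [div_le_iff₀ hr0]
    field_simp
    linarith
  have h1q : ordW g S q ≤ 1 := by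
    have := ordW_le g S hS hR q q hq hq.pos dvd_rfl
    rwa [div_self hq0.ne'] at this
  have h1qr : ordW g S (q * r) ≤ 1 / q := by
    have := ordW_le g S hS hR (q * r) r hrp (Nat.mul_pos hq.pos hrp.pos) (dvd_mul_left _ _)
    push_cast at this
    have e : (r : ℝ) / (q * r) = 1 / q := by field_simp
    rwa [e] at this
  have h2 : ∑ j ∈ Finset.range m, (ordW g S (p ^ (j + 1)) + ordW g S (p ^ (j + 1) * r) +
      (ordW g S (p ^ (j + 1) * q) + ordW g S (p ^ (j + 1) * q * r))) ≤
      KS p m * (1 + 1 / p + (1 / q + 1 / (p * q))) := by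
    rw [KS, Finset.sum_mul]
    apply Finset.sum_le_sum
    intro j _
    have hpj : 0 < p ^ (j + 1) := pow_pos hp.pos _
    have hpj' : (0 : ℝ) < (p : ℝ) ^ (j + 1) := pow_pos hp0 _
    have hd : p ∣ p ^ (j + 1) := dvd_pow_self _ (by omega)
    have a := ordW_le g S hS hR (p ^ (j + 1)) p hp hpj hd
    have b := ordW_le g S hS hR (p ^ (j + 1) * q) p hp
      (Nat.mul_pos hpj hq.pos) (Dvd.dvd.mul_right hd _)
    have c := ordW_le g S hS hR (p ^ (j + 1) * r) r hrp
      (Nat.mul_pos hpj hrp.pos) (dvd_mul_left _ _)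
    have d := ordW_le g S hS hR (p ^ (j + 1) * q * r) r hrp
      (Nat.mul_pos (Nat.mul_pos hpj hq.pos) hrp.pos) (dvd_mul_left _ _)
    push_cast at a b c d
    have e : (p : ℝ) / (p : ℝ) ^ (j + 1) * (1 + 1 / p + (1 / q + 1 / (p * q))) =
        (p : ℝ) / (p : ℝ) ^ (j + 1) + r / ((p : ℝ) ^ (j + 1) * r) +
        (p / ((p : ℝ) ^ (j + 1) * q) + r / ((p : ℝ) ^ (j + 1) * q * r)) := by
      field_simp
    rw [e]
    linarith
  have hp5' : (5 : ℝ) ≤ p := by exact_mod_cast hp5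
  have hq6' : (6 : ℝ) ≤ q := by exact_mod_cast (by omega : 6 ≤ q)
  have h3 := KS_le p m hp.two_le hm
  have hn := KS_nonneg p m
  have h4 : KS p m / p ≤ 1 / 4 := by
    have : KS p m / p ≤ (p / (p - 1)) / p := by gcongr
    refine this.trans ?_
    have e : (p : ℝ) / (p - 1) / p = 1 / (p - 1) := by
      field_simp
    rw [e]
    exact one_div_le_one_div_of_le (by norm_num) (by linarith)
  have h5 : KS p m ≤ 5 / 4 := by
    refine h3.trans ?_
    rw [div_le_iff₀ (by linarith)]
    linarith
  have h6 : (1 : ℝ) / q ≤ 1 / 6 := one_div_le_one_div_of_le (by norm_num) hq6'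
  have h7 : (2 : ℝ) / 3 ≤ 2 / r := by
    have : (r : ℝ) ≤ 3 := by exact_mod_cast hr3
    gcongr
  have h8 : KS p m * (1 + 1 / p + (1 / q + 1 / (p * q))) =
      KS p m + KS p m / p + KS p m * (1 / q) + KS p m / p * (1 / q) := by
    field_simp
    ring
  have hq1 : (0 : ℝ) ≤ 1 / q := by positivity
  have h9 : KS p m * (1 / q) ≤ 5 / 4 * (1 / 6) := by gcongr
  have h10 : KS p m / p * (1 / q) ≤ 1 / 4 * (1 / 6) := by gcongr
  linarith

/-- Every nonempty zero-sum set contains a minimal zero-sum set. -/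
theorem exists_min_zero {G : Type*} [AddCommGroup G] {n : ℕ} (g : Fin n → G) :
    ∀ (k : ℕ) (I : Finset (Fin n)), I.card = k → I.Nonempty → ∑ i ∈ I, g i = 0 →
      ∃ J ⊆ I, IsMinZeroSum g J := by
  intro k
  induction k using Nat.strong_induction_on with
  | _ k ih =>
  intro I hk hne h0
  by_cases h : ∀ J ⊂ I, J.Nonempty → ∑ i ∈ J, g i ≠ 0
  · exact ⟨I, subset_rfl, hne, h0, h⟩
  · push Not at h
    obtain ⟨J, hJ, hJne, hJ0⟩ := h
    obtain ⟨L, hL, hm⟩ := ih J.card (hk ▸ Finset.card_lt_card hJ) J rfl hJne hJ0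
    exact ⟨L, hL.trans hJ.subset, hm⟩

/-- Completion of partial factorizations. -/
theorem complete_fact {G : Type*} [AddCommGroup G] {n : ℕ} (g : Fin n → G)
    (U : Finset (Fin n)) :
    ∀ (k : ℕ) (I : Finset (Fin n)) (Q : Finpartition I), (U \ I).card = k → I ⊆ U →
      ∑ i ∈ U \ I, g i = 0 → (∀ A ∈ Q.parts, IsMinZeroSum g A) →
      ∃ P : Finpartition U, Q.parts ⊆ P.parts ∧ ∀ A ∈ P.parts, IsMinZeroSum g A := by
  intro k
  induction k using Nat.strong_induction_on with
  | _ k ih =>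
  intro I Q hk hIU h0 hQ
  by_cases hne : (U \ I).Nonempty
  · obtain ⟨J, hJ, hm⟩ := exists_min_zero g _ (U \ I) rfl hne h0
    have hdis : Disjoint I J := by
      rw [Finset.disjoint_left]
      intro a ha hb
      exact (Finset.mem_sdiff.1 (hJ hb)).2 ha
    have hJb : J ≠ ⊥ := by
      rw [Finset.bot_eq_empty]
      exact Finset.nonempty_iff_ne_empty.1 hm.1
    have hsd : U \ (I ⊔ J) = (U \ I) \ J := by
      rw [Finset.sup_eq_union]
      ext a
      simp only [Finset.mem_inter, Finset.mem_sdiff, Finset.mem_union]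
      tauto
    obtain ⟨P, hP1, hP2⟩ := ih (U \ (I ⊔ J)).card (by
        rw [hsd, ← hk]
        obtain ⟨j, hj⟩ := hm.1
        refine Finset.card_lt_card ⟨Finset.sdiff_subset, fun h => ?_⟩
        exact (Finset.mem_sdiff.1 (h (hJ hj))).2 hj) (I ⊔ J) (Q.extend hJb hdis rfl) rfl
      (by
        rw [Finset.sup_eq_union]
        exact Finset.union_subset hIU (hJ.trans Finset.sdiff_subset))
      (by
        rw [hsd]
        have := Finset.sum_sdiff (f := g) hJ
        rw [h0, hm.2.1, add_zero] at this
        exact this)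
      (by
        intro A hA
        simp only [Finpartition.extend_parts, Finset.mem_insert] at hA
        rcases hA with rfl | hA
        · exact hm
        · exact hQ A hA)
    refine ⟨P, fun A hA => hP1 ?_, hP2⟩
    simp [Finpartition.extend_parts, hA]
  · have hIU' : I = U := by
      rw [Finset.not_nonempty_iff_eq_empty, Finset.sdiff_eq_empty_iff_subset] at hne
      exact Finset.Subset.antisymm hIU hne
    subst hIU'
    exact ⟨Q, subset_rfl, hQ⟩

theorem UFIM_ICl {G : Type*} [AddCommGroup G] {n : ℕ} (g : Fin n → G) (h : IsUFIM g) :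
    ICl g Finset.univ := by
  obtain ⟨hne, P, hP, huniq⟩ := h
  have htot : ∀ (V : Finset (Fin n)) (Q : Finpartition V),
      (∀ A ∈ Q.parts, IsMinZeroSum g A) → ∑ i ∈ V, g i = 0 := by
    intro V Q hQ
    rw [← Q.biUnion_parts, Finset.sum_biUnion]
    · exact Finset.sum_eq_zero (fun A hA => (hQ A hA).2.1)
    · exact Q.disjoint
  have huniv : ∑ i, g i = 0 := htot _ P hP
  -- zero-sum sets are unions of parts
  have hsat : ∀ I : Finset (Fin n), ∑ i ∈ I, g i = 0 → ∀ A ∈ P.parts, ∀ a ∈ A, a ∈ I →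
      A ⊆ I := by
    intro I hI A hA a haA haI
    obtain ⟨Q, -, hQ⟩ := complete_fact g I _ ∅ (Finpartition.empty _) rfl (by simp)
      (by simpa using hI) (by simp)
    obtain ⟨R, hR1, hR⟩ := complete_fact g Finset.univ _ I Q rfl (by simp)
      (by
        have := Finset.sum_sdiff (f := g) (Finset.subset_univ I)
        rw [hI, huniv, add_zero] at this
        exact this) hQ
    have hRP : R = P := huniq R hR
    subst hRP
    obtain ⟨B, hB, haB⟩ := Q.exists_mem haI
    have : A = B := R.eq_of_mem_parts hA (hR1 hB) haA haB
    rw [this]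
    exact Q.subset hB
  refine ⟨fun i _ => hne i, ?_⟩
  intro I _ J _ hI hJ
  have e : (P.parts.filter (fun A => A ⊆ I ∩ J)).biUnion id = I ∩ J := by
    ext a
    simp only [Finset.mem_biUnion, Finset.mem_filter, id]
    constructor
    · rintro ⟨A, ⟨-, hA⟩, ha⟩
      exact hA ha
    · intro ha
      obtain ⟨A, hA, haA⟩ := P.exists_mem (Finset.mem_univ a)
      exact ⟨A, ⟨hA, Finset.subset_inter
        (hsat I hI A hA a haA (Finset.mem_inter.1 ha).1)
        (hsat J hJ A hA a haA (Finset.mem_inter.1 ha).2)⟩, haA⟩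
  rw [← e, Finset.sum_biUnion]
  · exact Finset.sum_eq_zero (fun A hA => (hP A (Finset.mem_filter.1 hA).1).2.1)
  · intro A hA B hB hAB
    exact P.disjoint (Finset.mem_filter.1 hA).1 (Finset.mem_filter.1 hB).1 hAB

theorem ICl_UFIM {G : Type*} [AddCommGroup G] {n : ℕ} (g : Fin n → G)
    (h : ICl g Finset.univ) (h0 : ∑ i, g i = 0) : IsUFIM g := by
  refine ⟨fun i => h.1 i (Finset.mem_univ _), ?_⟩
  obtain ⟨P, -, hP⟩ := complete_fact g Finset.univ _ ∅ (Finpartition.empty _) rfl (by simp)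
      (by simpa using h0) (by simp)
  refine ⟨P, hP, ?_⟩
  have hsub : ∀ P Q : Finpartition (Finset.univ : Finset (Fin n)), IsFactorization g P →
      IsFactorization g Q → P.parts ⊆ Q.parts := by
    intro P Q hP hQ A hA
    obtain ⟨a, ha⟩ := (hP A hA).1
    obtain ⟨B, hB, haB⟩ := Q.exists_mem (Finset.mem_univ a)
    have hz := h.2 A (Finset.subset_univ _) B (Finset.subset_univ _) (hP A hA).2.1
      (hQ B hB).2.1
    have hne : (A ∩ B).Nonempty := ⟨a, Finset.mem_inter.2 ⟨ha, haB⟩⟩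
    have h1 : A ∩ B = A := by
      by_contra hcon
      exact (hP A hA).2.2 (A ∩ B) (Finset.ssubset_iff_subset_ne.2
        ⟨Finset.inter_subset_left, hcon⟩) hne hz
    have h2 : A ∩ B = B := by
      by_contra hcon
      exact (hQ B hB).2.2 (A ∩ B) (Finset.ssubset_iff_subset_ne.2
        ⟨Finset.inter_subset_right, hcon⟩) hne hz
    rw [← h1, h2]
    exact hB
  intro Q hQ
  exact Finpartition.ext (Finset.Subset.antisymm (hsub Q P hQ hP) (hsub P Q hP hQ))

/-- Existence of a good family in the `N`-torsion of cross number `x`. -/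
def Lo (G : Type) [AddCommGroup G] (N : ℕ) (x : ℝ) : Prop :=
  ∃ (ι : Type) (_ : Fintype ι) (_ : DecidableEq ι) (g : ι → G), ICl g Finset.univ ∧
    ∑ i, g i = 0 ∧ (∀ i, N • g i = 0) ∧ ∑ i, (1 : ℝ) / addOrderOf (g i) = x

theorem Lo_one (G : Type) [AddCommGroup G] : Lo G 1 0 :=
  ⟨Empty, inferInstance, inferInstance, fun i => i.elim, ⟨fun i => i.elim, by simp⟩,
    by simp, fun i => i.elim, by simp⟩

theorem Lo_step (G : Type) [AddCommGroup G] (N : ℕ) (x : ℝ) (hL : Lo G N x) (l : ℕ)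
    (hl : l.Prime) (e : ℕ) (h : G) (hord : addOrderOf h = l ^ (e + 1)) (h1 : N • h ≠ 0)
    (h2 : (N * l) • h = 0) : Lo G (N * l) (x + l / (l : ℝ) ^ (e + 1)) := by
  obtain ⟨ι, i1, i2, g, hg, hg0, hgN, hgx⟩ := hL
  have hl2 := hl.two_le
  set z : Fin l := ⟨0, by omega⟩ with hz
  set u : Fin l → G := fun j => if j = z then -((l - 1) • h) else h with hu
  have huN : ∀ j, N • u j = N • h := by
    intro j
    by_cases hj : j = z
    · have e1 : N • h + N • ((l - 1) • h) = 0 := by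
        rw [← smul_add, ← succ_nsmul', Nat.sub_add_cancel (by omega), smul_smul, h2]
      simp only [hu, hj, if_true, smul_neg]
      exact (eq_neg_of_add_eq_zero_left e1).symm
    · simp [hu, hj]
  have huord : ∀ j, addOrderOf (u j) = l ^ (e + 1) := by
    intro j
    by_cases hj : j = z
    · simp only [hu, hj, if_true, addOrderOf_neg]
      rw [Nat.Coprime.addOrderOf_nsmul, hord]
      rw [hord]
      apply Nat.Coprime.pow_left
      rw [hl.coprime_iff_not_dvd]
      intro hd
      have := Nat.le_of_dvd (by omega) hd
      omega
    · simp [hu, hj, hord]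
  have husum : ∑ j, u j = 0 := by
    rw [← Finset.add_sum_erase _ _ (Finset.mem_univ z),
      Finset.sum_congr rfl (g := fun _ => h)
        (fun j hj => by simp [hu, (Finset.mem_erase.1 hj).1]),
      Finset.sum_const, Finset.card_erase_of_mem (Finset.mem_univ z), Finset.card_univ,
      Fintype.card_fin]
    simp [hu]
  have hNh : addOrderOf (N • h) = l := by
    have := Fact.mk hl
    apply addOrderOf_eq_prime _ h1
    rw [smul_smul, mul_comm, h2]
  have hsplit : ∀ I : Finset (ι ⊕ Fin l), ∑ i ∈ I, Sum.elim g u i =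
      ∑ i ∈ I.toLeft, g i + ∑ j ∈ I.toRight, u j := by
    intro I
    conv_lhs => rw [← Finset.toLeft_disjSum_toRight (u := I)]
    rw [Finset.sum_disjSum]
    simp
  have hright : ∀ I : Finset (ι ⊕ Fin l), ∑ i ∈ I, Sum.elim g u i = 0 →
      (I.toRight = ∅ ∨ I.toRight = Finset.univ) := by
    intro I hI
    rw [hsplit] at hI
    have h3 := congrArg (fun y => N • y) hI
    simp only [smul_add, Finset.smul_sum, smul_zero] at h3
    rw [Finset.sum_eq_zero (fun i _ => hgN i), zero_add,
      Finset.sum_congr rfl (fun j _ => huN j), Finset.sum_const,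
      ← addOrderOf_dvd_iff_nsmul_eq_zero, hNh] at h3
    by_cases hc : I.toRight.card = 0
    · left; exact Finset.card_eq_zero.1 hc
    · right
      rw [← Finset.card_eq_iff_eq_univ, Fintype.card_fin]
      have a := Nat.le_of_dvd (by omega) h3
      have b := Finset.card_le_univ I.toRight
      rw [Fintype.card_fin] at b
      omega
  have hleft : ∀ I : Finset (ι ⊕ Fin l), ∑ i ∈ I, Sum.elim g u i = 0 →
      ∑ i ∈ I.toLeft, g i = 0 := by
    intro I hI
    have h3 := hI
    rw [hsplit] at h3
    rcases hright I hI with h | h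
    · rw [h] at h3; simpa using h3
    · rw [h, husum, add_zero] at h3; exact h3
  refine ⟨ι ⊕ Fin l, inferInstance, inferInstance, Sum.elim g u, ⟨?_, ?_⟩, ?_, ?_, ?_⟩
  · rintro (i | j) _
    · exact hg.1 i (Finset.mem_univ _)
    · intro h0
      have h0' : u j = 0 := h0
      have := huN j
      rw [h0', smul_zero] at this
      exact h1 this.symm
  · intro I _ J _ hI hJ
    rw [hsplit, Finset.toLeft_inter, Finset.toRight_inter,
      hg.2 _ (Finset.subset_univ _) _ (Finset.subset_univ _) (hleft I hI) (hleft J hJ), zero_add]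
    rcases hright I hI with h | h <;> rcases hright J hJ with h' | h' <;>
      simp [h, h', husum]
  · rw [Fintype.sum_sum_type]
    simp [hg0, husum]
  · rintro (i | j)
    · simp only [Sum.elim_inl]
      rw [mul_comm, mul_smul, hgN, smul_zero]
    · simp only [Sum.elim_inr]
      rw [mul_comm, mul_smul, huN, smul_smul, mul_comm, h2]
  · rw [Fintype.sum_sum_type]
    simp only [Sum.elim_inl, Sum.elim_inr, hgx]
    rw [Finset.sum_congr rfl (fun j _ => by rw [huord j]), Finset.sum_const, Finset.card_univ,
      Fintype.card_fin, nsmul_eq_mul, mul_one_div]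
    push_cast
    rfl

theorem Lo_UFIM (G : Type) [AddCommGroup G] (N : ℕ) (x : ℝ) (hL : Lo G N x) :
    ∃ (n : ℕ) (g : Fin n → G), IsUFIM g ∧ crossNum g = x := by
  obtain ⟨ι, i1, i2, g, hg, hg0, -, hgx⟩ := hL
  set f := (Fintype.equivFin ι).symm with hf
  refine ⟨Fintype.card ι, fun i => g (f i), ICl_UFIM _ ⟨?_, ?_⟩ ?_, ?_⟩
  · intro i _
    exact hg.1 _ (Finset.mem_univ _)
  · intro I _ J _ hI hJ
    have e : ∀ A : Finset (Fin (Fintype.card ι)), ∑ i ∈ A, g (f i) =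
        ∑ i ∈ A.map f.toEmbedding, g i := by
      intro A
      rw [Finset.sum_map]
      rfl
    rw [e] at hI hJ ⊢
    rw [Finset.map_inter]
    exact hg.2 _ (Finset.subset_univ _) _ (Finset.subset_univ _) hI hJ
  · rw [Equiv.sum_comp f g, hg0]
  · unfold crossNum
    rw [Equiv.sum_comp f (fun i => (1 : ℝ) / addOrderOf (g i)), hgx]

theorem ZMod_exists_order (n d : ℕ) (hn : n ≠ 0) (hd : d ∣ n) :
    ∃ h : ZMod n, addOrderOf h = d := by
  obtain ⟨k, rfl⟩ := hd
  refine ⟨(k : ℕ), ?_⟩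
  have hk : 0 < k := Nat.pos_of_ne_zero (fun h => hn (by simp [h]))
  rw [ZMod.addOrderOf_coe _ hn, Nat.gcd_eq_right (dvd_mul_left _ _), Nat.mul_div_cancel _ hk]

theorem lower_bound (r p q m : ℕ) (hr : r.Prime) (hp : p.Prime) (hq : q.Prime)
    (hrp : r < p) (hpq : p < q) :
    Lo (ZMod (r * p ^ m * q)) (r * p ^ m * q) (KS p m + 1 + 1) := by
  have hn : r * p ^ m * q ≠ 0 :=
    mul_ne_zero (mul_ne_zero hr.ne_zero (pow_ne_zero _ hp.ne_zero)) hq.ne_zero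
  have step : ∀ (N : ℕ) (x : ℝ), Lo (ZMod (r * p ^ m * q)) N x → ∀ (l e : ℕ), l.Prime →
      l ^ (e + 1) ∣ r * p ^ m * q → ¬ l ^ (e + 1) ∣ N → l ^ (e + 1) ∣ N * l →
      Lo (ZMod (r * p ^ m * q)) (N * l) (x + l / (l : ℝ) ^ (e + 1)) := by
    intro N x hL l e hl h1 h2 h3
    obtain ⟨h, hh⟩ := ZMod_exists_order _ _ hn h1
    exact Lo_step _ N x hL l hl e h hh
      (fun h0 => h2 (hh ▸ addOrderOf_dvd_iff_nsmul_eq_zero.2 h0))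
      (addOrderOf_dvd_iff_nsmul_eq_zero.1 (hh ▸ h3))
  have hr0 : (r : ℝ) ≠ 0 := by exact_mod_cast hr.ne_zero
  have hq0 : (q : ℝ) ≠ 0 := by exact_mod_cast hq.ne_zero
  have hcrp : Nat.Coprime p r := (Nat.coprime_primes hp hr).2 hrp.ne'
  have s1 : Lo (ZMod (r * p ^ m * q)) r 1 := by
    have := step 1 0 (Lo_one _) r 0 hr
      (by simpa using Dvd.dvd.mul_right (dvd_mul_right r (p ^ m)) q)
      (by simpa using hr.ne_one) (by simp)
    simpa [hr0] using this
  have s2 : ∀ j, j ≤ m → Lo (ZMod (r * p ^ m * q)) (r * p ^ j) (1 + KS p j) := by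
    intro j
    induction j with
    | zero => intro _; simpa [KS] using s1
    | succ j ih =>
      intro hj
      have := step _ _ (ih (by omega)) p j hp
        (Dvd.dvd.mul_right (Dvd.dvd.mul_left (pow_dvd_pow p hj) r) q)
        (by
          intro hd
          have h3 := (Nat.Coprime.pow_left (j + 1) hcrp).dvd_of_dvd_mul_left hd
          have := (Nat.pow_dvd_pow_iff_le_right hp.one_lt).1 h3
          omega)
        (by rw [mul_assoc, ← pow_succ]; exact dvd_mul_left _ _)
      have e : KS p (j + 1) = KS p j + p / (p : ℝ) ^ (j + 1) := by
        simp [KS, Finset.sum_range_succ]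
      rw [e, pow_succ p j, ← mul_assoc, ← add_assoc]
      exact this
  have s3 := step _ _ (s2 m le_rfl) q 0 hq (by simp)
    (by
      rw [zero_add, pow_one]
      intro hd
      rcases hq.dvd_mul.1 hd with h | h
      · have := (Nat.prime_dvd_prime_iff_eq hq hr).1 h
        omega
      · have := (Nat.prime_dvd_prime_iff_eq hq hp).1 (hq.dvd_of_dvd_pow h)
        omega)
    (by simp)
  have e : (1 : ℝ) + KS p m + q / (q : ℝ) ^ (0 + 1) = KS p m + 1 + 1 := by
    rw [zero_add, pow_one, div_self hq0]; ring
  rwa [e] at s3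

/-- The largeness hypothesis excludes `p = 3`. -/
theorem p_ge_five (r : ℕ) (hr : r = 2 ∨ r = 3) (c : ℝ) (hc : 1 < c) (m : ℕ) (hm : 1 ≤ m)
    (p : ℕ) (hp : p.Prime) (hrp : r < p)
    (hlarge : 1 / (r : ℝ) + ((p : ℝ) ^ m - 1) / ((p : ℝ) ^ (m + 1) - (p : ℝ) ^ m)
        + 1 / (c * p) ≥
      Real.logb 2 ((r : ℝ) * c * (p : ℝ) ^ (m + 1)) / (p : ℝ)) : 5 ≤ p := by
  by_contra hcon
  have hp34 : p = 3 ∨ p = 4 := by omega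
  rcases hp34 with rfl | rfl
  swap
  · revert hp; decide
  have hr2 : r = 2 := by omega
  subst hr2
  push_cast at hlarge
  have hk : (0 : ℝ) < 3 ^ m := by positivity
  have e1 : ((3 : ℝ) ^ m - 1) / ((3 : ℝ) ^ (m + 1) - (3 : ℝ) ^ m) ≤ 1 / 2 := by
    have : (3 : ℝ) ^ (m + 1) - (3 : ℝ) ^ m = 2 * 3 ^ m := by ring
    rw [this, div_le_div_iff₀ (by positivity) (by norm_num)]
    linarith
  have e2 : 1 / (c * 3) ≤ 1 / 3 := one_div_le_one_div_of_le (by norm_num) (by linarith)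
  have e3 : (4 : ℝ) < Real.logb 2 (2 * c * 3 ^ (m + 1)) := by
    have h9 : (9 : ℝ) ≤ 3 ^ (m + 1) := by
      calc (9 : ℝ) = 3 ^ 2 := by norm_num
        _ ≤ 3 ^ (m + 1) := pow_le_pow_right₀ (by norm_num) (by omega)
    rw [Real.lt_logb_iff_rpow_lt (by norm_num) (by positivity)]
    have : (2 : ℝ) ^ (4 : ℝ) = 16 := by
      rw [show (4 : ℝ) = ((4 : ℕ) : ℝ) by norm_num, Real.rpow_natCast]; norm_num
    rw [this]
    nlinarith
  linarith

end KOneAux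

/-- Corollary: let `r ∈ {2,3}`, `c > 1` real, `m ≥ 1`, and primes `r < p < q ≤ cp`.
If `1/r + (p^m − 1)/(p^{m+1} − p^m) + 1/(cp) ≥ log₂(r·c·p^{m+1})/p`, then
`K₁(C_{rp^m q}) = K₁*(C_{rp^m q}) = 2 + (p^m − 1)/(p^m − p^{m−1})`. -/
theorem K1_rpmq (r : ℕ) (hr : r = 2 ∨ r = 3) (c : ℝ) (hc : 1 < c) (m : ℕ) (hm : 1 ≤ m)
    (p q : ℕ) (hp : p.Prime) (hq : q.Prime) (hrp : r < p) (hpq : p < q)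
    (hqc : (q : ℝ) ≤ c * p)
    (hlarge : 1 / (r : ℝ) + ((p : ℝ) ^ m - 1) / ((p : ℝ) ^ (m + 1) - (p : ℝ) ^ m)
        + 1 / (c * p) ≥
      Real.logb 2 ((r : ℝ) * c * (p : ℝ) ^ (m + 1)) / (p : ℝ)) :
    K1 (ZMod (r * p ^ m * q)) =
      2 + ((p : ℝ) ^ m - 1) / ((p : ℝ) ^ m - (p : ℝ) ^ (m - 1)) := by
  have hrP : r.Prime := by rcases hr with rfl | rfl <;> norm_num
  have hp5 := p_ge_five r hr c hc m hm p hp hrp hlarge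
  have hn : r * p ^ m * q ≠ 0 :=
    mul_ne_zero (mul_ne_zero hrP.ne_zero (pow_ne_zero _ hp.ne_zero)) hq.ne_zero
  have hNZ : NeZero (r * p ^ m * q) := ⟨hn⟩
  rw [← KS_eq p m hp.two_le hm]
  have hval : (2 : ℝ) + KS p m = KS p m + 1 + 1 := by ring
  rw [hval]
  apply IsGreatest.csSup_eq
  refine ⟨Lo_UFIM _ _ _ (lower_bound r p q m hrP hp hq hrp hpq), ?_⟩
  rintro x ⟨n, g, hg, rfl⟩
  refine bound_pqr p m q r hp hq hpq hm hr hp5 g Finset.univ (UFIM_ICl g hg) ?_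
  intro i _
  have : p ^ m * q * r = r * p ^ m * q := by ring
  rw [this, nsmul_eq_mul, ZMod.natCast_self, zero_mul]
end
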